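/- arXiv:2210.09483 — 3 statements merged into one kernel-verified Lean document; each statement's English description precedes it below -/
import Mathlib

section
/- Let γ > 1 and let U₋, U*, U₊, Ũ* ∈ (0,∞) × ℝ and speeds s₁ < 0 < s₂ and s̃₁ < 0 < s̃₂ satisfy the four Rankine–Hugoniot conditions: −s₁(U₊ − U*) + F(U₊) − F(U*) = 0, −s₂(U* − U₋) + F(U*) − F(U₋) = 0, −s̃₁(Ũ* − U₋) + F(Ũ*) − F(U₋) = 0, and −s̃₂(U₊ − Ũ*) + F(U₊) − F(Ũ*) = 0. Set t₀ = 1/(s₂ − s₁) and x₀ = s₂/(s₂ − s₁), and define 𝒲: ℝ × (0,∞) → ℝ² by: for 0 < t ≤ t₀, 𝒲(x,t) = U₋ if x < s₂t, 𝒲(x,t) = U* if s₂t < x < s₁t + 1, 𝒲(x,t) = U₊ if x > s₁t + 1; and for t > t₀, 𝒲(x,t) = U₋ if x − x₀ < s̃₁(t − t₀), 𝒲(x,t) = Ũ* if s̃₁(t − t₀) < x − x₀ < s̃₂(t − t₀), 𝒲(x,t) = U₊ if x − x₀ > s̃₂(t − t₀). Then 𝒲 is a weak solution of ∂ₜU +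 ∂ₓF(U) = 0 with initial data U₀: that is, for every smooth compactly supported test function φ: ℝ × ℝ → ℝ², one has ∫₀^∞ ∫_ℝ ( 𝒲(x,t)·∂ₜφ(x,t) + F(𝒲(x,t))·∂ₓφ(x,t) ) dx dt + ∫_ℝ U₀(x)·φ(x,0) dx = 0, where U₀(x) = U₋ for x < 0, U₀(x) = U* for 0 < x < 1, and U₀(x) = U₊ for x > 1. -/
open Real MeasureTheory

noncomputable def pP (γ v : ℝ) : ℝ := v ^ (-γ)

/-- p-system flux `F(v,u) = (-u, p v)`. -/
noncomputable def Fl (γ : ℝ) (U : ℝ × ℝ) : ℝ × ℝ := (-U.2, pP γ U.1)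

/-- Euclidean dot product on `ℝ × ℝ`. -/
def dot2 (a b : ℝ × ℝ) : ℝ := a.1 * b.1 + a.2 * b.2

/-!
Superpose fronts: `u = U_L + ∑ᵢ 1_{x > aᵢ + sᵢ t} Jᵢ` carries the flux
`f = F U_L + ∑ᵢ 1_{x > aᵢ + sᵢ t} sᵢ Jᵢ` as soon as each jump `Jᵢ` satisfies the Rankine–Hugoniot
condition. In the frame moving with a front, `∂ₜφ + sᵢ ∂ₓφ` is a pure time derivative, so Fubini and
the fundamental theorem of calculus show that the pair `(u, f)` satisfies the weak identity on every
half-plane `t > τ`, with initial term `∫ u(x, τ) φ(x, τ) dx`. This holds even beyond the time at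
which the fronts cross. Hence the incoming pattern may be integrated over `t > 0` and over `t > t₀`;
the difference is its contribution up to `t₀`. At `t₀` the incoming and the outgoing patterns are
the same single jump at `x₀`, so their initial terms there cancel.
-/

open Set

section Balance

variable {G : Type*} [NormedAddCommGroup G] [NormedSpace ℝ G]

/-- The weak identity `∫_{t > τ} ∫ q dx dt = -∫ u(x, τ) dx` on all half-planes `t > τ`, for points
`(x, t)` of space-time, together with the integrability that makes it additive in `(q, u)`. For a
test function `φ`, it is applied to `q = u₀ ∂ₜφ + f ∂ₓφ` and `u = u₀ φ`, where `u₀` is a density and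
`f` its flux. -/
structure HalfPlaneBalance (q u : ℝ × ℝ → G) : Prop where
  integrable : Integrable q
  integrable_slice (τ : ℝ) : Integrable fun x => u (x, τ)
  integral_eq (τ : ℝ) : ∫ t in Ioi τ, ∫ x, q (x, t) = -∫ x, u (x, τ)

namespace HalfPlaneBalance

variable {q q₁ q₂ u u₁ u₂ : ℝ × ℝ → G}

theorem integrable_integral (h : HalfPlaneBalance q u) : Integrable fun t => ∫ x, q (x, t) :=
  h.integrable.integral_prod_right

theorem add (h₁ : HalfPlaneBalance q₁ u₁) (h₂ : HalfPlaneBalance q₂ u₂) :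
    HalfPlaneBalance (q₁ + q₂) (u₁ + u₂) where
  integrable := h₁.integrable.add h₂.integrable
  integrable_slice τ := (h₁.integrable_slice τ).add (h₂.integrable_slice τ)
  integral_eq τ := by
    have slices : (fun t => ∫ x, (q₁ + q₂) (x, t))
        =ᵐ[volume.restrict (Ioi τ)] fun t => (∫ x, q₁ (x, t)) + ∫ x, q₂ (x, t) := by
      filter_upwards [ae_restrict_of_ae h₁.integrable.prod_left_ae,
        ae_restrict_of_ae h₂.integrable.prod_left_ae] with t ht₁ ht₂
      exact integral_add ht₁ ht₂
    rw [integral_congr_ae slices, integral_add h₁.integrable_integral.integrableOn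
      h₂.integrable_integral.integrableOn, h₁.integral_eq, h₂.integral_eq, ← neg_add]
    exact congrArg Neg.neg (integral_add (h₁.integrable_slice τ) (h₂.integrable_slice τ)).symm

theorem integral_Ioc (h : HalfPlaneBalance q u) {τ₀ τ₁ : ℝ} (hτ : τ₀ ≤ τ₁) :
    ∫ t in Ioc τ₀ τ₁, ∫ x, q (x, t) = (∫ x, u (x, τ₁)) - ∫ x, u (x, τ₀) := by
  have split := setIntegral_union (Ioc_disjoint_Ioi le_rfl) measurableSet_Ioi
    (h.integrable_integral.integrableOn (s := Ioc τ₀ τ₁))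
    (h.integrable_integral.integrableOn (s := Ioi τ₁))
  rw [Ioc_union_Ioi_eq_Ioi hτ, h.integral_eq, h.integral_eq] at split
  rw [eq_sub_of_add_eq split.symm]
  abel

theorem integral_Ioi_of_eqOn (h₁ : HalfPlaneBalance q₁ u₁) (h₂ : HalfPlaneBalance q₂ u₂)
    {τ₀ τ₁ : ℝ} (hτ : τ₀ ≤ τ₁) (hu : ∀ x, u₁ (x, τ₁) = u₂ (x, τ₁)) {g : ℝ → G}
    (hg₁ : EqOn g (fun t => ∫ x, q₁ (x, t)) (Ioc τ₀ τ₁))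
    (hg₂ : EqOn g (fun t => ∫ x, q₂ (x, t)) (Ioi τ₁)) :
    ∫ t in Ioi τ₀, g t = -∫ x, u₁ (x, τ₀) := by
  have int₁ : IntegrableOn g (Ioc τ₀ τ₁) :=
    (integrableOn_congr_fun hg₁ measurableSet_Ioc).2 h₁.integrable_integral.integrableOn
  have int₂ : IntegrableOn g (Ioi τ₁) :=
    (integrableOn_congr_fun hg₂ measurableSet_Ioi).2 h₂.integrable_integral.integrableOn
  rw [← Ioc_union_Ioi_eq_Ioi hτ,
    setIntegral_union (Ioc_disjoint_Ioi le_rfl) measurableSet_Ioi int₁ int₂,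
    setIntegral_congr_fun measurableSet_Ioc hg₁, setIntegral_congr_fun measurableSet_Ioi hg₂,
    h₁.integral_Ioc hτ, h₂.integral_eq]
  simp only [hu]
  abel

end HalfPlaneBalance

end Balance

section TestFunction

variable {G : Type*} [NormedAddCommGroup G] {ψ : ℝ × ℝ → G}

theorem integrable_slice_of_hasCompactSupport (hψ : Continuous ψ) (hc : HasCompactSupport ψ)
    (t : ℝ) : Integrable fun x => ψ (x, t) := by
  have embedding : Topology.IsClosedEmbedding fun x : ℝ => (x, t) :=
    Function.LeftInverse.isClosedEmbedding (f := Prod.fst) (fun _ => rfl) (by fun_prop)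
      (by fun_prop)
  exact Continuous.integrable_of_hasCompactSupport (by fun_prop)
    (hc.comp_isClosedEmbedding embedding)

theorem integrable_comp_shear (hψ : Continuous ψ) (hc : HasCompactSupport ψ) (s : ℝ) :
    Integrable fun p : ℝ × ℝ => ψ (p.1 + s * p.2, p.2) := by
  have embedding : Topology.IsClosedEmbedding fun p : ℝ × ℝ => (p.1 + s * p.2, p.2) :=
    Function.LeftInverse.isClosedEmbedding (f := fun p => (p.1 - s * p.2, p.2))
      (fun p => by simp) (by fun_prop) (by fun_prop)
  exact Continuous.integrable_of_hasCompactSupport (by fun_prop)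
    (hc.comp_isClosedEmbedding embedding)

variable [NormedSpace ℝ G]

theorem continuous_fderiv_apply_const (hψ : ContDiff ℝ 1 ψ) (v : ℝ × ℝ) :
    Continuous fun p => fderiv ℝ ψ p v :=
  (hψ.continuous_fderiv one_ne_zero).clm_apply continuous_const

theorem integral_Ioi_fderiv_along_ray [CompleteSpace G] (hψ : ContDiff ℝ 1 ψ)
    (hc : HasCompactSupport ψ) (y s τ : ℝ) :
    ∫ t in Ioi τ, fderiv ℝ ψ (y + s * t, t) (s, 1) = -ψ (y + s * τ, τ) := by
  have embedding : Topology.IsClosedEmbedding fun t : ℝ => (y + s * t, t) :=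
    Function.LeftInverse.isClosedEmbedding (f := Prod.snd) (fun _ => rfl) (by fun_prop)
      (by fun_prop)
  have ray_hasDerivAt (t : ℝ) : HasDerivAt (fun t : ℝ => (y + s * t, t)) (s, 1) t := by
    simpa using (((hasDerivAt_id t).const_mul s).const_add y).prodMk (hasDerivAt_id t)
  have deriv_along_ray :
      deriv (fun t => ψ (y + s * t, t)) = fun t => fderiv ℝ ψ (y + s * t, t) (s, 1) :=
    funext fun t => ((hψ.differentiable one_ne_zero _).hasFDerivAt.comp_hasDerivAt t
      (ray_hasDerivAt t)).deriv
  rw [← deriv_along_ray]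
  exact (hc.comp_isClosedEmbedding embedding).integral_Ioi_deriv_eq
    (hψ.comp (by fun_prop)) τ

theorem integral_indicator_sheared_strip (S : Set ℝ) (s t : ℝ) :
    ∫ x, {p : ℝ × ℝ | p.1 - s * p.2 ∈ S}.indicator ψ (x, t)
      = ∫ y, S.indicator (fun y => ψ (y + s * t, t)) y := by
  rw [← integral_add_right_eq_self _ (s * t)]
  refine integral_congr_ae (.of_forall fun y => ?_)
  by_cases hy : y ∈ S <;> simp [hy]

theorem halfPlaneBalance_sheared_strip [CompleteSpace G] (hψ : ContDiff ℝ 1 ψ)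
    (hc : HasCompactSupport ψ) (s : ℝ) {S : Set ℝ} (hS : MeasurableSet S) :
    HalfPlaneBalance ({p : ℝ × ℝ | p.1 - s * p.2 ∈ S}.indicator fun p => fderiv ℝ ψ p (s, 1))
      ({p : ℝ × ℝ | p.1 - s * p.2 ∈ S}.indicator ψ) where
  integrable := by
    refine Integrable.indicator ?_ (measurableSet_preimage (by fun_prop) hS)
    exact (continuous_fderiv_apply_const hψ _).integrable_of_hasCompactSupport
      (hc.fderiv_apply ℝ _)
  integrable_slice τ := (integrable_slice_of_hasCompactSupport hψ.continuous hc τ).indicator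
    (measurableSet_preimage (f := fun x => x - s * τ) (by fun_prop) hS)
  integral_eq τ := by
    have integrable_moving :=
      integrable_comp_shear (continuous_fderiv_apply_const hψ (s, 1)) (hc.fderiv_apply ℝ _) s
    have swap : ∫ t in Ioi τ, ∫ y in S, fderiv ℝ ψ (y + s * t, t) (s, 1)
        = ∫ y in S, ∫ t in Ioi τ, fderiv ℝ ψ (y + s * t, t) (s, 1) := by
      refine integral_integral_swap ?_
      rw [Measure.prod_restrict]
      exact integrable_moving.swap.integrableOn
    simp only [integral_indicator_sheared_strip, integral_indicator hS, swap,
      integral_Ioi_fderiv_along_ray hψ hc, integral_neg]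

theorem halfPlaneBalance_fderiv_time [CompleteSpace G] (hψ : ContDiff ℝ 1 ψ)
    (hc : HasCompactSupport ψ) : HalfPlaneBalance (fun p => fderiv ℝ ψ p (0, 1)) ψ := by
  simpa using halfPlaneBalance_sheared_strip hψ hc 0 MeasurableSet.univ

theorem halfPlaneBalance_fderiv_space (hψ : ContDiff ℝ 1 ψ) (hc : HasCompactSupport ψ) :
    HalfPlaneBalance (fun p => fderiv ℝ ψ p (1, 0)) 0 where
  integrable := (continuous_fderiv_apply_const hψ _).integrable_of_hasCompactSupport
    (hc.fderiv_apply ℝ _)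
  integrable_slice _ := integrable_zero _ _ _
  integral_eq τ := by
    have slice_eq_zero (t : ℝ) : ∫ x, fderiv ℝ ψ (x, t) (1, 0) = 0 :=
      integral_eq_zero_of_hasDerivAt_of_integrable
        (fun x => (hψ.differentiable one_ne_zero _).hasFDerivAt.comp_hasDerivAt x
          ((hasDerivAt_id x).prodMk (hasDerivAt_const x t)))
        (integrable_slice_of_hasCompactSupport (continuous_fderiv_apply_const hψ _)
          (hc.fderiv_apply ℝ _) t)
        (integrable_slice_of_hasCompactSupport hψ.continuous hc t)
    simp [slice_eq_zero]

end TestFunction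

section ThreeState

/-- `w` takes the values `L`, `M`, `R` on the intervals cut out by `ξ₁` and `ξ₂`; its values at
these two points are left free. -/
structure IsThreeState {X : Type*} (w : ℝ → X) (L M R : X) (ξ₁ ξ₂ : ℝ) : Prop where
  left : ∀ x, x < ξ₁ → w x = L
  middle : ∀ x, ξ₁ < x → x < ξ₂ → w x = M
  right : ∀ x, ξ₂ < x → w x = R

namespace IsThreeState

variable {X : Type*} {w : ℝ → X} {L M R : X} {ξ₁ ξ₂ : ℝ}

theorem of_sub {c : ℝ} (left : ∀ x, x - c < ξ₁ → w x = L)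
    (middle : ∀ x, ξ₁ < x - c → x - c < ξ₂ → w x = M) (right : ∀ x, ξ₂ < x - c → w x = R) :
    IsThreeState w L M R (c + ξ₁) (c + ξ₂) where
  left x hx := left x (sub_lt_iff_lt_add'.2 hx)
  middle x hx₁ hx₂ := middle x (lt_sub_iff_add_lt'.2 hx₁) (sub_lt_iff_lt_add'.2 hx₂)
  right x hx := right x (lt_sub_iff_add_lt'.2 hx)

theorem map {Y : Type*} (h : IsThreeState w L M R ξ₁ ξ₂) (F : X → Y) :
    IsThreeState (fun x => F (w x)) (F L) (F M) (F R) ξ₁ ξ₂ where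
  left x hx := congrArg F (h.left x hx)
  middle x hx₁ hx₂ := congrArg F (h.middle x hx₁ hx₂)
  right x hx := congrArg F (h.right x hx)

end IsThreeState

variable {A : Type*} [AddCommGroup A]

/-- The three-state step function as a superposition of its two jumps. It remains
meaningful when `ξ₂ < ξ₁`, that is, after the two fronts have crossed. -/
noncomputable def stepProfile (L M R : A) (ξ₁ ξ₂ x : ℝ) : A :=
  L + (Ioi ξ₁).indicator (fun _ => M - L) x + (Ioi ξ₂).indicator (fun _ => R - M) x

theorem stepProfile_self (L M M' R : A) (ξ x : ℝ) :
    stepProfile L M R ξ ξ x = stepProfile L M' R ξ ξ x := by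
  by_cases hx : x ∈ Ioi ξ <;> simp [stepProfile, hx]

theorem IsThreeState.ae_eq_stepProfile {w : ℝ → A} {L M R : A} {ξ₁ ξ₂ : ℝ}
    (h : IsThreeState w L M R ξ₁ ξ₂) (hξ : ξ₁ ≤ ξ₂) : w =ᵐ[volume] stepProfile L M R ξ₁ ξ₂ := by
  filter_upwards [Measure.ae_ne volume ξ₁, Measure.ae_ne volume ξ₂] with x hx₁ hx₂
  rcases lt_or_gt_of_ne hx₁ with lt₁ | gt₁
  · simp [h.left x lt₁, stepProfile, lt₁.le, (lt₁.trans_le hξ).le]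
  rcases lt_or_gt_of_ne hx₂ with lt₂ | gt₂
  · simp [h.middle x gt₁ lt₂, stepProfile, gt₁, lt₂.le]
  · simp [h.right x gt₂, stepProfile, gt₁, gt₂]

end ThreeState

section Pairing

variable {E V G : Type*} [NormedAddCommGroup E] [NormedSpace ℝ E] [NormedAddCommGroup V]
  [NormedSpace ℝ V] [NormedAddCommGroup G] [NormedSpace ℝ G]

variable (B : E →L[ℝ] V →L[ℝ] G) {φ : ℝ × ℝ → V}

theorem fderiv_pairing_const_left (hφ : ContDiff ℝ 1 φ) (c : E) (p v : ℝ × ℝ) :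
    fderiv ℝ (fun p => B c (φ p)) p v = B c (fderiv ℝ φ p v) :=
  congrArg (· v) ((B c).hasFDerivAt.comp p (hφ.differentiable one_ne_zero p).hasFDerivAt).fderiv

theorem fderiv_apply_moving_direction (φ : ℝ × ℝ → V) (s : ℝ) (p : ℝ × ℝ) :
    fderiv ℝ φ p (s, 1) = s • fderiv ℝ φ p (1, 0) + fderiv ℝ φ p (0, 1) := by
  rw [← map_smul, ← map_add]
  simp

theorem halfPlaneBalance_stepProfile [CompleteSpace G] (hφ : ContDiff ℝ 1 φ)
    (hc : HasCompactSupport φ) {L M R fL fM fR : E} {s₁ s₂ : ℝ}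
    (jump₁ : fM - fL = s₁ • (M - L)) (jump₂ : fR - fM = s₂ • (R - M)) (a₁ a₂ : ℝ) :
    HalfPlaneBalance
      (fun p => B (stepProfile L M R (a₁ + s₁ * p.2) (a₂ + s₂ * p.2) p.1) (fderiv ℝ φ p (0, 1))
        + B (stepProfile fL fM fR (a₁ + s₁ * p.2) (a₂ + s₂ * p.2) p.1) (fderiv ℝ φ p (1, 0)))
      (fun p => B (stepProfile L M R (a₁ + s₁ * p.2) (a₂ + s₂ * p.2) p.1) (φ p)) := by
  have smooth (c : E) : ContDiff ℝ 1 fun p => B c (φ p) := (B c).contDiff.comp hφ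
  have compact (c : E) : HasCompactSupport fun p => B c (φ p) :=
    hc.comp_left (g := B c) (map_zero _)
  have superposition :=
    (((halfPlaneBalance_fderiv_time (smooth L) (compact L)).add
      (halfPlaneBalance_fderiv_space (smooth fL) (compact fL))).add
      (halfPlaneBalance_sheared_strip (smooth (M - L)) (compact _) s₁
        (measurableSet_Ioi (a := a₁)))).add
      (halfPlaneBalance_sheared_strip (smooth (R - M)) (compact _) s₂
        (measurableSet_Ioi (a := a₂)))
  convert superposition using 1
  · ext p
    simp only [stepProfile, jump₁, jump₂, fderiv_pairing_const_left B hφ,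
      fderiv_apply_moving_direction φ s₁, fderiv_apply_moving_direction φ s₂, Pi.add_apply,
      indicator, mem_ofPred_eq, mem_Ioi, lt_sub_iff_add_lt]
    split_ifs <;>
      simp only [map_add, map_sub, map_smul, map_zero, add_apply, sub_apply, smul_apply,
        zero_apply] <;>
      module
  · ext p
    simp only [stepProfile, Pi.add_apply, add_zero, indicator, mem_ofPred_eq, mem_Ioi,
      lt_sub_iff_add_lt]
    split_ifs <;> simp

theorem IsThreeState.integral_pairing_add {w : ℝ → E} {L M R : E} {ξ₁ ξ₂ : ℝ}
    (h : IsThreeState w L M R ξ₁ ξ₂) (hξ : ξ₁ ≤ ξ₂) (F : E → E) (g₁ g₂ : ℝ → V) :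
    ∫ x, (B (w x) (g₁ x) + B (F (w x)) (g₂ x))
      = ∫ x, (B (stepProfile L M R ξ₁ ξ₂ x) (g₁ x)
          + B (stepProfile (F L) (F M) (F R) ξ₁ ξ₂ x) (g₂ x)) := by
  refine integral_congr_ae ?_
  filter_upwards [h.ae_eq_stepProfile hξ, (h.map F).ae_eq_stepProfile hξ] with x hw hFw
  rw [hFw, hw]

theorem flux_sub_eq_smul_of_rankineHugoniot {F : E → E} {U₁ U₂ : E} {s : ℝ}
    (h : (-s) • (U₂ - U₁) + (F U₂ - F U₁) = 0) : F U₂ - F U₁ = s • (U₂ - U₁) := by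
  rw [neg_smul, neg_add_eq_zero] at h
  exact h.symm

theorem two_shock_pattern_is_weak_solution_general [CompleteSpace G]
    (B : E →L[ℝ] V →L[ℝ] G) (F : E → E) {Um Us Up Ut : E}
    {s₁ s₂ st₁ st₂ : ℝ} (hs : s₁ < s₂) (hst : st₁ ≤ st₂)
    (hRH1 : (-s₁) • (Up - Us) + (F Up - F Us) = 0)
    (hRH2 : (-s₂) • (Us - Um) + (F Us - F Um) = 0)
    (hRH3 : (-st₁) • (Ut - Um) + (F Ut - F Um) = 0)
    (hRH4 : (-st₂) • (Up - Ut) + (F Up - F Ut) = 0)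
    {t₀ x₀ : ℝ} (ht₀ : t₀ = 1 / (s₂ - s₁)) (hx₀ : x₀ = s₂ / (s₂ - s₁))
    {W : ℝ → ℝ → E}
    (incoming : ∀ t, 0 < t → t ≤ t₀ → IsThreeState (W · t) Um Us Up (s₂ * t) (s₁ * t + 1))
    (outgoing : ∀ t, t₀ < t →
      IsThreeState (W · t) Um Ut Up (x₀ + st₁ * (t - t₀)) (x₀ + st₂ * (t - t₀)))
    {U₀ : ℝ → E} (initial : IsThreeState U₀ Um Us Up 0 1)
    {φ : ℝ × ℝ → V} (hφ : ContDiff ℝ 1 φ) (hc : HasCompactSupport φ) :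
    (∫ t in Ioi (0 : ℝ), ∫ x : ℝ, (B (W x t) (fderiv ℝ φ (x, t) (0, 1))
        + B (F (W x t)) (fderiv ℝ φ (x, t) (1, 0))))
      + ∫ x : ℝ, B (U₀ x) (φ (x, 0)) = 0 := by
  have hd : 0 < s₂ - s₁ := sub_pos.2 hs
  have front₂_meets : 0 + s₂ * t₀ = x₀ := by rw [ht₀, hx₀]; ring
  have front₁_meets : 1 + s₁ * t₀ = x₀ := by rw [ht₀, hx₀]; field_simp; ring
  have balance_incoming := halfPlaneBalance_stepProfile B hφ hc
    (flux_sub_eq_smul_of_rankineHugoniot hRH2) (flux_sub_eq_smul_of_rankineHugoniot hRH1) 0 1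
  have balance_outgoing := halfPlaneBalance_stepProfile B hφ hc
    (flux_sub_eq_smul_of_rankineHugoniot hRH3) (flux_sub_eq_smul_of_rankineHugoniot hRH4)
    (x₀ - st₁ * t₀) (x₀ - st₂ * t₀)
  have initial_term : ∫ x, B (U₀ x) (φ (x, 0))
      = ∫ x, B (stepProfile Um Us Up (0 + s₂ * 0) (1 + s₁ * 0) x) (φ (x, 0)) := by
    refine integral_congr_ae ?_
    filter_upwards [initial.ae_eq_stepProfile zero_le_one] with x hx
    simp [hx]
  rw [initial_term, balance_incoming.integral_Ioi_of_eqOn balance_outgoing (τ₁ := t₀)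
    (by rw [ht₀]; positivity), neg_add_cancel]
  · intro x
    simp only [front₁_meets, front₂_meets, sub_add_cancel, stepProfile_self Um Us Ut Up]
  · intro t ht
    have ordered : s₂ * t ≤ s₁ * t + 1 := by
      linarith [mul_le_mul_of_nonneg_left ht.2 hd.le]
    simpa only [zero_add, add_comm 1 (s₁ * t)] using
      (incoming t ht.1 ht.2).integral_pairing_add B ordered F _ _
  · intro t ht
    have ordered : x₀ + st₁ * (t - t₀) ≤ x₀ + st₂ * (t - t₀) := by
      have := sub_pos.2 (mem_Ioi.1 ht)
      gcongr
    have position (s : ℝ) : x₀ - s * t₀ + s * t = x₀ + s * (t - t₀) := by ring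
    simpa only [position] using (outgoing t ht).integral_pairing_add B ordered F _ _

end Pairing

/-- `dot2` as a continuous bilinear map, the pairing of `ℝ × ℝ` with itself to which the weak
formulation refers. -/
noncomputable def dot2Pairing : ℝ × ℝ →L[ℝ] ℝ × ℝ →L[ℝ] ℝ :=
  (ContinuousLinearMap.mul ℝ ℝ).bilinearComp (.fst ℝ ℝ ℝ) (.fst ℝ ℝ ℝ)
    + (ContinuousLinearMap.mul ℝ ℝ).bilinearComp (.snd ℝ ℝ ℝ) (.snd ℝ ℝ ℝ)

/-- the piecewise-constant two-shock pattern is a weak solution of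
`∂ₜU + ∂ₓF(U) = 0` with the three-state initial data. -/
theorem two_shock_pattern_is_weak_solution
    (γ : ℝ) (hγ : 1 < γ)
    (Um Us Up Ut : ℝ × ℝ) (hUm : 0 < Um.1) (hUs : 0 < Us.1) (hUp : 0 < Up.1) (hUt : 0 < Ut.1)
    (s₁ s₂ st₁ st₂ : ℝ) (hs₁ : s₁ < 0) (hs₂ : 0 < s₂) (hst₁ : st₁ < 0) (hst₂ : 0 < st₂)
    (hRH1 : (-s₁) • (Up - Us) + (Fl γ Up - Fl γ Us) = 0)
    (hRH2 : (-s₂) • (Us - Um) + (Fl γ Us - Fl γ Um) = 0)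
    (hRH3 : (-st₁) • (Ut - Um) + (Fl γ Ut - Fl γ Um) = 0)
    (hRH4 : (-st₂) • (Up - Ut) + (Fl γ Up - Fl γ Ut) = 0)
    (t₀ x₀ : ℝ) (ht₀ : t₀ = 1 / (s₂ - s₁)) (hx₀ : x₀ = s₂ / (s₂ - s₁))
    (W : ℝ → ℝ → ℝ × ℝ)
    (hW1 : ∀ x t : ℝ, 0 < t → t ≤ t₀ → x < s₂ * t → W x t = Um)
    (hW2 : ∀ x t : ℝ, 0 < t → t ≤ t₀ → s₂ * t < x → x < s₁ * t + 1 → W x t = Us)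
    (hW3 : ∀ x t : ℝ, 0 < t → t ≤ t₀ → s₁ * t + 1 < x → W x t = Up)
    (hW4 : ∀ x t : ℝ, t₀ < t → x - x₀ < st₁ * (t - t₀) → W x t = Um)
    (hW5 : ∀ x t : ℝ, t₀ < t → st₁ * (t - t₀) < x - x₀ → x - x₀ < st₂ * (t - t₀) → W x t = Ut)
    (hW6 : ∀ x t : ℝ, t₀ < t → st₂ * (t - t₀) < x - x₀ → W x t = Up)
    (U₀ : ℝ → ℝ × ℝ)
    (hU₀1 : ∀ x : ℝ, x < 0 → U₀ x = Um)
    (hU₀2 : ∀ x : ℝ, 0 < x → x < 1 → U₀ x = Us)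
    (hU₀3 : ∀ x : ℝ, 1 < x → U₀ x = Up) :
    ∀ φ : ℝ × ℝ → ℝ × ℝ, ContDiff ℝ (⊤ : ℕ∞) φ → HasCompactSupport φ →
      (∫ t in Set.Ioi (0 : ℝ), ∫ x : ℝ,
          (dot2 (W x t) (fderiv ℝ φ (x, t) (0, 1)) +
            dot2 (Fl γ (W x t)) (fderiv ℝ φ (x, t) (1, 0))))
        + (∫ x : ℝ, dot2 (U₀ x) (φ (x, 0))) = 0 := by
  exact fun φ hφ hc => two_shock_pattern_is_weak_solution_general dot2Pairing (Fl γ)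
    (hs₁.trans hs₂) (hst₁.trans hst₂).le hRH1 hRH2 hRH3 hRH4 ht₀ hx₀
    (fun t ht ht' => ⟨(hW1 · t ht ht'), (hW2 · t ht ht'), (hW3 · t ht ht')⟩)
    (fun t ht => .of_sub (hW4 · t ht) (hW5 · t ht) (hW6 · t ht)) ⟨hU₀1, hU₀2, hU₀3⟩
    (hφ.of_le (by simp)) hc
end

section
/- Let γ > 1, let U* = (v*, u*) and U₊ = (v₊, u₊) with v*, v₊ > 0 satisfy the Rankine–Hugoniot condition −s₁(U₊ − U*) + F(U₊) − F(U*) = 0 for some speed s₁ satisfying the Lax condition λ₁(v₊) < s₁ < λ₁(v*) < 0, and let a > 0 satisfy the sub-characteristic condition √(−p′(v)) < a for every v in the closed interval between v* and v₊. Then there exists an s₁-relaxation shock profile U^{S₁} connecting U* (at −∞) and U₊ (at +∞), and it is unique up to a shift: any two s₁-relaxation shock profiles connecting U* and U₊ are translates of one another, i.e. if U and Ū are two such profiles then there exists h ∈ ℝ with Ū(ξ) = U(ξ + h) for all ξ ∈ ℝ. -/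
open Real Filter Topology

noncomputable def lam1 (γ v : ℝ) : ℝ := -Real.sqrt (γ * v ^ (-γ - 1))
noncomputable def lam2 (γ v : ℝ) : ℝ := Real.sqrt (γ * v ^ (-γ - 1))

/-- an `s`-relaxation shock profile connecting `Ul` (at `-∞`) and `Ur` (at `+∞`):
a bounded `C²` map `U = (V,W) : ℝ → (0,∞) × ℝ` with
`(a² - s²) U'' = -s U' + (F ∘ U)'`, `U → Ul` at `-∞`, `U → Ur` at `+∞`, `U' → 0` at `±∞`. -/
def IsProfile (γ a s : ℝ) (Ul Ur : ℝ × ℝ) (U : ℝ → ℝ × ℝ) : Prop :=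
  ContDiff ℝ 2 U ∧ (∀ ξ, 0 < (U ξ).1) ∧ Bornology.IsBounded (Set.range U) ∧
  (∀ ξ, (a ^ 2 - s ^ 2) • deriv (deriv U) ξ = (-s) • deriv U ξ + deriv (Fl γ ∘ U) ξ) ∧
  Tendsto U atBot (𝓝 Ul) ∧ Tendsto U atTop (𝓝 Ur) ∧
  Tendsto (deriv U) atBot (𝓝 0) ∧ Tendsto (deriv U) atTop (𝓝 0)

open Set MeasureTheory

/-!
Integrating the profile equation once, with the constant fixed at `-∞`, turns it into the planar
system `(a² - s²) U' = -s (U - Ul) + F(U) - F(Ul)`.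

Existence. Put `V = v₊ + w` and `W = u₊ - s u`, and use `τ = s ξ / (a² - s²)` as time. The system
becomes `w' = -w + u`, `u' = -u + g(w)`, that is `(d/dτ + 1)² w = g(w)`, where
`g(w) = (p(v₊) - p(v₊ + w)) / s²` is increasing, fixes `0` and `δ = v* - v₊` by Rankine–Hugoniot,
and lies strictly above the diagonal in between by convexity of `p`. Since `(d/dτ + 1)⁻¹` is
averaging against an exponential law, the solutions are the fixed points of a monotone operator.
With `ρ² = g'(0) > 1`, the functions `e^((ρ-1)τ) - M e^(2(ρ-1)τ)` and `min δ e^((ρ-1)τ)` are a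
subsolution and a supersolution, and the Knaster–Tarski fixed point between them, being monotone,
connects `0` to `δ`.

Uniqueness. Shift two profiles so that their first components agree at some `x₀`. The difference of
these components, multiplied by `e^(sξ/(a²-s²))`, solves `D'' = -ω q` with `ω > 0` and `q` the
difference of the pressures, and `D q ≤ 0` because `p` is decreasing. So `D²` is convex; it vanishes
at `x₀` and at `+∞`, hence on `[x₀, ∞)`, and uniqueness for the initial value problem does the rest.
-/

/-! ### Ordinary differential equations on the line -/

theorem eq_of_hasDerivAt_of_contDiffAt {E : Type*} [NormedAddCommGroup E] [NormedSpace ℝ E]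
    {X : E → E} {f g : ℝ → E} (hX : ∀ t, ContDiffAt ℝ 1 X (f t))
    (hf : ∀ t, HasDerivAt f (X (f t)) t) (hg : ∀ t, HasDerivAt g (X (g t)) t) {t₀ : ℝ}
    (h₀ : f t₀ = g t₀) : f = g := by
  have hfc : Continuous f := continuous_iff_continuousAt.2 fun t => (hf t).continuousAt
  have hgc : Continuous g := continuous_iff_continuousAt.2 fun t => (hg t).continuousAt
  have hopen : IsOpen {t | f t = g t} := isOpen_iff_mem_nhds.2 fun t (ht : f t = g t) => by
    obtain ⟨K, s, hs, hK⟩ := (hX t).exists_lipschitzOnWith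
    refine ODE_solution_unique_of_eventually (v := fun _ => X) (s := fun _ => s)
      (.of_forall fun _ => hK) ?_ ?_ ht
    · filter_upwards [hfc.continuousAt hs] with r hr using ⟨hf r, hr⟩
    · rw [ht] at hs
      filter_upwards [hgc.continuousAt hs] with r hr using ⟨hg r, hr⟩
  have huniv := IsClopen.eq_univ ⟨isClosed_eq hfc hgc, hopen⟩ ⟨t₀, h₀⟩
  exact funext (eq_univ_iff_forall.1 huniv)

theorem contDiff_two_of_hasDerivAt {E : Type*} [NormedAddCommGroup E] [NormedSpace ℝ E]
    {X : E → E} {f : ℝ → E} (hX : ∀ t, ContDiffAt ℝ 1 X (f t))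
    (hf : ∀ t, HasDerivAt f (X (f t)) t) : ContDiff ℝ 2 f := by
  have hdiff : Differentiable ℝ f := fun t => (hf t).differentiableAt
  have hderiv : deriv f = X ∘ f := funext fun t => (hf t).deriv
  have hC1 : ContDiff ℝ 1 f := by
    rw [contDiff_one_iff_deriv, hderiv]
    exact ⟨hdiff, continuous_iff_continuousAt.2 fun t =>
      (hX t).continuousAt.comp (hdiff t).continuousAt⟩
  rw [← one_add_one_eq_two, contDiff_succ_iff_deriv, hderiv]
  exact ⟨hdiff, by simp, contDiff_iff_contDiffAt.2 fun t => (hX t).comp t hC1.contDiffAt⟩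

theorem convexOn_sq_of_mul_deriv2_nonneg {D D' D'' : ℝ → ℝ}
    (hD : ∀ x, HasDerivAt D (D' x) x) (hD' : ∀ x, HasDerivAt D' (D'' x) x)
    (hsign : ∀ x, 0 ≤ D x * D'' x) : ConvexOn ℝ univ fun x => D x ^ 2 := by
  have hsq : ∀ x, HasDerivAt (fun x => D x ^ 2) (2 * (D x * D' x)) x := fun x =>
    ((hD x).pow 2).congr_deriv (by push_cast; ring)
  have hsq' : ∀ x, HasDerivAt (fun x => 2 * (D x * D' x)) (2 * (D' x ^ 2 + D x * D'' x)) x :=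
    fun x => (((hD x).mul (hD' x)).const_mul 2).congr_deriv (by ring)
  refine Monotone.convexOn_univ_of_deriv (fun x => (hsq x).differentiableAt) ?_
  rw [funext fun x => (hsq x).deriv]
  refine monotone_of_deriv_nonneg (fun x => (hsq' x).differentiableAt) fun x => ?_
  rw [(hsq' x).deriv]
  have := hsign x
  positivity

theorem eq_zero_of_convexOn_of_tendsto_zero {f : ℝ → ℝ} (hf : ConvexOn ℝ univ f)
    (hnonneg : ∀ x, 0 ≤ f x) (hlim : Tendsto f atTop (𝓝 0)) {x₀ x : ℝ} (hx₀ : f x₀ = 0)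
    (hx : x₀ ≤ x) : f x = 0 := by
  refine le_antisymm (ge_of_tendsto hlim ?_) (hnonneg x)
  filter_upwards [eventually_ge_atTop x] with y hy
  have hmax := hf.le_max_of_mem_Icc (mem_univ x₀) (mem_univ y) ⟨hx, hy⟩
  rwa [hx₀, max_eq_right (hnonneg y)] at hmax

theorem hasDerivAt_exp_neg_mul_mul {f : ℝ → ℝ} {f' x : ℝ} (k : ℝ) (hf : HasDerivAt f f' x) :
    HasDerivAt (fun x => exp (-(k * x)) * f x) (exp (-(k * x)) * (f' - k * f x)) x :=
  (((hasDerivAt_id x).const_mul k).neg.exp.mul hf).congr_deriv (by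
    simp only [id_eq, Pi.neg_apply]; ring)

theorem eq_zero_of_hasDerivAt_of_mul_nonpos {σ c : ℝ} (hσ : 0 < σ) (hc : 0 < c) {d e q : ℝ → ℝ}
    (hd : ∀ x, HasDerivAt d (c⁻¹ * (σ * d x - e x)) x)
    (he : ∀ x, HasDerivAt e (c⁻¹ * (σ * e x + q x)) x) (hsign : ∀ x, d x * q x ≤ 0) {C : ℝ}
    (hC : ∀ x, |d x| ≤ C) {x₀ : ℝ} (hx₀ : d x₀ = 0) {x : ℝ} (hx : x₀ < x) :
    d x = 0 ∧ e x = 0 := by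
  let k := σ / c
  let D : ℝ → ℝ := fun x => exp (-(k * x)) * d x
  let D' : ℝ → ℝ := fun x => -c⁻¹ * (exp (-(k * x)) * e x)
  have hD : ∀ x, HasDerivAt D (D' x) x := fun x =>
    (hasDerivAt_exp_neg_mul_mul k (hd x)).congr_deriv (by simp only [D', k]; field_simp; ring)
  have hD' : ∀ x, HasDerivAt D' (-(c⁻¹ ^ 2 * exp (-(k * x)) * q x)) x := fun x =>
    ((hasDerivAt_exp_neg_mul_mul k (he x)).const_mul (-c⁻¹)).congr_deriv (by
      simp only [k]; field_simp; ring)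
  have hconvex : ConvexOn ℝ univ fun x => D x ^ 2 :=
    convexOn_sq_of_mul_deriv2_nonneg hD hD' fun x => by
      have hweight : 0 ≤ c⁻¹ ^ 2 * exp (-(k * x)) ^ 2 := by positivity
      linarith [mul_nonneg hweight (neg_nonneg.2 (hsign x))]
  have hlim : Tendsto D atTop (𝓝 0) := by
    have hexp : Tendsto (fun x => exp (-(k * x)) * C) atTop (𝓝 (0 * C)) :=
      (tendsto_exp_neg_atTop_nhds_zero.comp
        (tendsto_id.const_mul_atTop (div_pos hσ hc))).mul_const C
    rw [zero_mul] at hexp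
    refine squeeze_zero_norm (fun x => ?_) hexp
    rw [norm_mul, norm_of_nonneg (exp_pos _).le]
    exact mul_le_mul_of_nonneg_left (hC x) (exp_pos _).le
  have hD_eq : ∀ y, x₀ ≤ y → D y = 0 := fun y hy => pow_eq_zero_iff two_ne_zero |>.1 <|
    eq_zero_of_convexOn_of_tendsto_zero hconvex (fun x => sq_nonneg _)
      (by simpa using hlim.pow 2) (by simp [D, hx₀]) hy
  have hderiv_eq : D' x = 0 := (hD x).unique <| (hasDerivAt_const x 0).congr_of_eventuallyEq <|
    (eventually_ge_nhds hx).mono hD_eq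
  simpa [D, D', hc.ne'] using And.intro (hD_eq x hx.le) hderiv_eq

/-! ### Fixed points between a subsolution and a supersolution -/

theorem exists_fixedPoint_of_subsolution_of_supersolution {ι α : Type*} [Preorder ι]
    [CompleteLattice α] (Φ : (ι →o α) →o (ι →o α)) {l : ι → α} {v : ι →o α} (hlv : l ≤ v)
    (hv : Φ v ≤ v) (hl : ∀ w ≤ v, l ≤ w → l ≤ Φ w) : ∃ w, Φ w = w ∧ l ≤ w ∧ w ≤ v := by
  -- The least monotone majorant `m` of `l`, which need not be monotone itself.
  let m : ι →o α := sInf {w | l ≤ w}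
  have hm : ∀ w : ι →o α, l ≤ w → m ≤ w := fun w hw => sInf_le hw
  have hlm : l ≤ m := fun i => by
    rw [OrderHom.sInf_apply]
    exact le_iInf₂ fun w hw => hw i
  have hmΦ : m ≤ Φ m := hm _ (hl m (hm v hlv) hlm)
  have hmw : m ≤ Φ.prevFixed v hv := (OrderHom.const _ v ⊓ Φ).le_gfp (le_inf (hm v hlv) hmΦ)
  exact ⟨Φ.prevFixed v hv, (Φ.prevFixed v hv).2, hlm.trans hmw, Φ.prevFixed_le hv⟩

/-! ### Exponential averages -/

/-- The average `∫₀^∞ e^(-t) f(τ - t) dt` of the past of `f` against the exponential law. It inverts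
`d/dτ + 1` on bounded functions, see `hasDerivAt_expAvg`. -/
noncomputable def expAvg (f : ℝ → ℝ) (τ : ℝ) : ℝ :=
  ∫ t in Ioi 0, exp (-t) * f (τ - t)

/-- The integrals defining `expAvg f` converge, so that `expAvg f τ` is not a junk value. -/
def ExpIntegrable (f : ℝ → ℝ) : Prop :=
  ∀ τ, IntegrableOn (fun t => exp (-t) * f (τ - t)) (Ioi 0)

theorem ExpIntegrable.of_bound {f : ℝ → ℝ} {C : ℝ} (hf : Measurable f) (hC : ∀ x, |f x| ≤ C) :
    ExpIntegrable f := fun _ =>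
  (integrableOn_exp_neg_Ioi 0).mul_bdd (c := C)
    (hf.comp (measurable_const.sub measurable_id)).aestronglyMeasurable (.of_forall fun _ => hC _)

theorem exp_neg_mul_exp_mul_sub (k τ t : ℝ) :
    exp (-t) * exp (k * (τ - t)) = exp (k * τ) * exp (-(1 + k) * t) := by
  rw [← exp_add, ← exp_add]
  ring_nf

theorem ExpIntegrable.const_mul_exp {k : ℝ} (hk : -1 < k) (A : ℝ) :
    ExpIntegrable fun t => A * exp (k * t) := fun τ => by
  have h := (exp_neg_integrableOn_Ioi 0 (b := 1 + k) (by linarith)).const_mul (A * exp (k * τ))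
  refine h.congr (.of_forall fun t => ?_)
  linear_combination -A * exp_neg_mul_exp_mul_sub k τ t

theorem ExpIntegrable.sub {f g : ℝ → ℝ} (hf : ExpIntegrable f) (hg : ExpIntegrable g) :
    ExpIntegrable fun t => f t - g t := fun τ => by
  simpa only [mul_sub] using! (hf τ).sub (hg τ)

theorem expAvg_mono {f g : ℝ → ℝ} (hf : ExpIntegrable f) (hg : ExpIntegrable g) (h : f ≤ g) :
    expAvg f ≤ expAvg g := fun τ =>
  integral_mono (hf τ) (hg τ) fun _ => mul_le_mul_of_nonneg_left (h _) (exp_pos _).le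

theorem monotone_expAvg {f : ℝ → ℝ} (hf : ExpIntegrable f) (h : Monotone f) :
    Monotone (expAvg f) := fun x y hxy =>
  integral_mono (hf x) (hf y) fun _ =>
    mul_le_mul_of_nonneg_left (h (sub_le_sub_right hxy _)) (exp_pos _).le

theorem expAvg_sub {f g : ℝ → ℝ} (hf : ExpIntegrable f) (hg : ExpIntegrable g) (τ : ℝ) :
    expAvg (fun t => f t - g t) τ = expAvg f τ - expAvg g τ := by
  simp only [expAvg, mul_sub]
  exact integral_sub (hf τ) (hg τ)

theorem expAvg_const_mul_exp {k : ℝ} (hk : -1 < k) (A τ : ℝ) :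
    expAvg (fun t => A * exp (k * t)) τ = A / (1 + k) * exp (k * τ) := by
  simp only [expAvg, mul_left_comm _ A, exp_neg_mul_exp_mul_sub]
  rw [integral_const_mul, integral_const_mul, integral_exp_mul_Ioi (by linarith), mul_zero,
    exp_zero, neg_div_neg_eq]
  ring

theorem expAvg_const (A τ : ℝ) : expAvg (fun _ => A) τ = A := by
  simpa using expAvg_const_mul_exp (k := 0) (by norm_num) A τ

theorem tendsto_expAvg {f : ℝ → ℝ} (hf : Measurable f) {C : ℝ} (hC : ∀ x, |f x| ≤ C)
    {l : Filter ℝ} [l.IsCountablyGenerated] (hl : ∀ t, Tendsto (fun τ => τ - t) l l) {L : ℝ}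
    (hL : Tendsto f l (𝓝 L)) : Tendsto (expAvg f) l (𝓝 L) := by
  rw [← expAvg_const L 0]
  refine tendsto_integral_filter_of_dominated_convergence (fun t => exp (-t) * C)
    (.of_forall fun τ => (ExpIntegrable.of_bound hf hC τ).aestronglyMeasurable)
    (.of_forall fun τ => .of_forall fun t => ?_) ((integrableOn_exp_neg_Ioi 0).mul_const C)
    (.of_forall fun t => (hL.comp (hl t)).const_mul _)
  rw [norm_mul, norm_of_nonneg (exp_pos _).le]
  exact mul_le_mul_of_nonneg_left (hC _) (exp_pos _).le

theorem expAvg_eq_exp_neg_mul_integral_Iic (f : ℝ → ℝ) (τ : ℝ) :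
    expAvg f τ = exp (-τ) * ∫ r in Iic τ, exp r * f r := by
  have hshift := (Measure.measurePreserving_sub_left volume τ).setIntegral_preimage_emb
    (MeasurableEquiv.subLeft τ).measurableEmbedding (fun r => exp (-τ) * (exp r * f r)) (Iio τ)
  rw [preimage_const_sub_Iio, sub_self] at hshift
  rw [← integral_const_mul, integral_Iic_eq_integral_Iio, ← hshift, expAvg]
  simp only [← mul_assoc, ← exp_add, neg_add_cancel_left, sub_eq_add_neg]

section Bounded

variable {f : ℝ → ℝ} {C : ℝ}

theorem integrableOn_exp_mul_Iic_of_bound (hC : ∀ x, |f x| ≤ C) (hf : Measurable f) (τ : ℝ) :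
    IntegrableOn (fun r => exp r * f r) (Iic τ) :=
  (integrableOn_exp_Iic τ).mul_bdd hf.aestronglyMeasurable (.of_forall hC)

theorem expAvg_eq_exp_neg_mul_add (hC : ∀ x, |f x| ≤ C) (hf : Measurable f) :
    expAvg f = fun τ => exp (-τ) *
      ((∫ r in Iic 0, exp r * f r) + ∫ r in (0 : ℝ)..τ, exp r * f r) := by
  ext τ
  rw [expAvg_eq_exp_neg_mul_integral_Iic, ← intervalIntegral.integral_Iic_sub_Iic
    (integrableOn_exp_mul_Iic_of_bound hC hf 0) (integrableOn_exp_mul_Iic_of_bound hC hf τ),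
    add_sub_cancel]

theorem continuous_expAvg (hC : ∀ x, |f x| ≤ C) (hf : Measurable f) : Continuous (expAvg f) := by
  rw [expAvg_eq_exp_neg_mul_add hC hf]
  have hprimitive : Continuous fun τ => ∫ r in (0 : ℝ)..τ, exp r * f r :=
    intervalIntegral.continuous_primitive (fun a b => intervalIntegrable_iff.2 <|
      (integrableOn_exp_mul_Iic_of_bound hC hf (max a b)).mono_set fun _ hx => hx.2) 0
  fun_prop

theorem hasDerivAt_expAvg (hC : ∀ x, |f x| ≤ C) (hf : Continuous f) (τ : ℝ) :
    HasDerivAt (expAvg f) (-expAvg f τ + f τ) τ := by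
  rw [expAvg_eq_exp_neg_mul_add hC hf.measurable]
  have hprimitive := ((continuous_exp.mul hf).integral_hasStrictDerivAt 0 τ).hasDerivAt
  refine ((hasDerivAt_neg τ).exp.mul (hprimitive.const_add _)).congr_deriv ?_
  have hexp : exp (-τ) * exp τ = 1 := by rw [← exp_add, neg_add_cancel, exp_zero]
  simp only [Pi.mul_apply]
  linear_combination f τ * hexp

end Bounded

section IccValued

variable {a b : ℝ} (v : ℝ →o Icc a b)

theorem monotone_coe_orderHom : Monotone fun τ => (v τ : ℝ) :=
  (Subtype.mono_coe _).comp v.monotone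

theorem abs_coe_orderHom_le (τ : ℝ) : |(v τ : ℝ)| ≤ max |a| |b| :=
  abs_le_max_abs_abs (v τ).2.1 (v τ).2.2

theorem ExpIntegrable.coe_orderHom : ExpIntegrable fun τ => (v τ : ℝ) :=
  .of_bound (monotone_coe_orderHom v).measurable (abs_coe_orderHom_le v)

theorem expAvg_coe_orderHom_mem_Icc (τ : ℝ) : expAvg (fun t => (v t : ℝ)) τ ∈ Icc a b := by
  have hconst : ∀ A : ℝ, ExpIntegrable fun _ => A := fun A =>
    .of_bound measurable_const fun _ => le_refl |A|
  have hlower := expAvg_mono (hconst a) (.coe_orderHom v) (fun t => (v t).2.1) τ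
  have hupper := expAvg_mono (.coe_orderHom v) (hconst b) (fun t => (v t).2.2) τ
  rw [expAvg_const] at hlower hupper
  exact ⟨hlower, hupper⟩

variable (a b) in
/-- The averaging operator `expAvg` as a monotone self-map of the lattice of nondecreasing functions
with values in `[a, b]`. -/
noncomputable def expAvgHom : (ℝ →o Icc a b) →o (ℝ →o Icc a b) where
  toFun v :=
    { toFun := fun τ => ⟨expAvg (fun t => (v t : ℝ)) τ, expAvg_coe_orderHom_mem_Icc v τ⟩
      monotone' := monotone_expAvg (.coe_orderHom v) (monotone_coe_orderHom v) }
  monotone' v w h := expAvg_mono (.coe_orderHom v) (.coe_orderHom w) fun t => h t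

theorem coe_expAvgHom (τ : ℝ) : (expAvgHom a b v τ : ℝ) = expAvg (fun t => (v t : ℝ)) τ := rfl

variable {v}

theorem expAvgHom_le_const_mul_exp {A k : ℝ} (hk : -1 < k) (h : ∀ τ, (v τ : ℝ) ≤ A * exp (k * τ))
    (τ : ℝ) : (expAvgHom a b v τ : ℝ) ≤ A / (1 + k) * exp (k * τ) := by
  rw [coe_expAvgHom, ← expAvg_const_mul_exp hk]
  exact expAvg_mono (.coe_orderHom v) (.const_mul_exp hk A) h τ

theorem exp_sub_exp_le_expAvgHom {A B k l : ℝ} (hk : -1 < k) (hl : -1 < l)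
    (h : ∀ τ, A * exp (k * τ) - B * exp (l * τ) ≤ v τ) (τ : ℝ) :
    A / (1 + k) * exp (k * τ) - B / (1 + l) * exp (l * τ) ≤ expAvgHom a b v τ := by
  have hA := ExpIntegrable.const_mul_exp hk A
  have hB := ExpIntegrable.const_mul_exp hl B
  rw [coe_expAvgHom, ← expAvg_const_mul_exp hk, ← expAvg_const_mul_exp hl, ← expAvg_sub hA hB]
  exact expAvg_mono (hA.sub hB) (.coe_orderHom v) h τ

theorem hasDerivAt_coe_expAvgHom (hv : Continuous fun τ => (v τ : ℝ)) (τ : ℝ) :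
    HasDerivAt (fun τ => (expAvgHom a b v τ : ℝ)) (-expAvgHom a b v τ + v τ) τ :=
  hasDerivAt_expAvg (abs_coe_orderHom_le v) hv τ

variable (v) in
theorem continuous_coe_expAvgHom : Continuous fun τ => (expAvgHom a b v τ : ℝ) :=
  continuous_expAvg (abs_coe_orderHom_le v) (monotone_coe_orderHom v).measurable

theorem tendsto_coe_expAvgHom {l : Filter ℝ} [l.IsCountablyGenerated]
    (hl : ∀ t, Tendsto (fun τ => τ - t) l l) {L : ℝ} (hL : Tendsto (fun τ => (v τ : ℝ)) l (𝓝 L)) :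
    Tendsto (fun τ => (expAvgHom a b v τ : ℝ)) l (𝓝 L) :=
  tendsto_expAvg (monotone_coe_orderHom v).measurable (abs_coe_orderHom_le v) hl hL

end IccValued

/-! ### Monostable nonlinearities and their heteroclinic orbits -/

/-- A monostable nonlinearity: a nondecreasing self-map `g` of `[0, δ]` whose only fixed points are
the endpoints, and which near the unstable one `0` is pinched between its tangent line of slope
`ρ ^ 2 > 1` and a parabola with the same tangent. -/
structure IsMonostable (ρ B δ : ℝ) (g : ℝ → ℝ) : Prop where
  one_lt : 1 < ρ
  pos : 0 < δ
  monotoneOn : MonotoneOn g (Icc 0 δ)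
  continuousOn : ContinuousOn g (Icc 0 δ)
  le_tangent : ∀ w ∈ Icc 0 δ, g w ≤ ρ ^ 2 * w
  parabola_le : ∀ w ∈ Icc 0 δ, ρ ^ 2 * w - B * w ^ 2 ≤ g w
  map_right : g δ = δ
  ne_self : ∀ w ∈ Ioo 0 δ, g w ≠ w

/-- The subsolution `e^(κτ) - M e^(2κτ)`, where `κ = ρ - 1` is the growth rate of the linearisation
at `0`; the second exponential absorbs the quadratic error of that linearisation. -/
noncomputable def expSubsolution (ρ M τ : ℝ) : ℝ :=
  exp ((ρ - 1) * τ) - M * exp (2 * (ρ - 1) * τ)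

theorem exp_two_mul_mul (k τ : ℝ) : exp (2 * k * τ) = exp (k * τ) ^ 2 := by
  rw [mul_assoc, ← exp_nat_mul, Nat.cast_ofNat]

theorem expSubsolution_eq (ρ M τ : ℝ) :
    expSubsolution ρ M τ = exp ((ρ - 1) * τ) - M * exp ((ρ - 1) * τ) ^ 2 := by
  rw [expSubsolution, exp_two_mul_mul]

theorem expSubsolution_le_exp {M : ℝ} (hM : 0 ≤ M) (ρ τ : ℝ) :
    expSubsolution ρ M τ ≤ exp ((ρ - 1) * τ) :=
  sub_le_self _ (by positivity)

theorem four_mul_expSubsolution_le_one (ρ M τ : ℝ) : 4 * M * expSubsolution ρ M τ ≤ 1 := by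
  rw [expSubsolution_eq]
  nlinarith [sq_nonneg (2 * M * exp ((ρ - 1) * τ) - 1)]

theorem exists_expSubsolution_pos {ρ M : ℝ} (hρ : 1 < ρ) : ∃ τ, 0 < expSubsolution ρ M τ := by
  have hsmall : Tendsto (fun τ => M * exp ((ρ - 1) * τ)) atBot (𝓝 (M * 0)) :=
    (tendsto_exp_atBot.comp (tendsto_id.const_mul_atBot (sub_pos.2 hρ))).const_mul M
  rw [mul_zero] at hsmall
  obtain ⟨τ, hτ⟩ := (hsmall.eventually_lt_const one_pos).exists
  refine ⟨τ, ?_⟩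
  rw [expSubsolution_eq]
  nlinarith [exp_pos ((ρ - 1) * τ)]

namespace IsMonostable

variable {ρ B δ M : ℝ} {g : ℝ → ℝ}

theorem map_zero (h : IsMonostable ρ B δ g) : g 0 = 0 := by
  have hupper := h.le_tangent 0 ⟨le_rfl, h.pos.le⟩
  have hlower := h.parabola_le 0 ⟨le_rfl, h.pos.le⟩
  linarith

theorem mapsTo (h : IsMonostable ρ B δ g) : MapsTo g (Icc 0 δ) (Icc 0 δ) := by
  have himage := h.monotoneOn.mapsTo_Icc
  rwa [h.map_zero, h.map_right] at himage

theorem curvature_pos (h : IsMonostable ρ B δ g) : 0 < B := by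
  have hlower := h.parabola_le δ ⟨h.pos.le, le_rfl⟩
  rw [h.map_right] at hlower
  have hslope : 0 < (ρ ^ 2 - 1) * δ := mul_pos (sub_pos.2 (one_lt_pow₀ h.one_lt two_ne_zero)) h.pos
  exact (mul_pos_iff_of_pos_right (pow_pos h.pos 2)).1 (by linarith)

theorem sq_div_one_add_div_one_add (h : IsMonostable ρ B δ g) :
    ρ ^ 2 / (1 + (ρ - 1)) / (1 + (ρ - 1)) = 1 := by
  have hρ : ρ ≠ 0 := (one_pos.trans h.one_lt).ne'
  rw [add_sub_cancel]
  field_simp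

/-- `g` as a monotone self-map of the interval `[0, δ]`. -/
noncomputable def intervalHom (h : IsMonostable ρ B δ g) : Icc 0 δ →o Icc 0 δ where
  toFun := h.mapsTo.restrict
  monotone' x y hxy := h.monotoneOn x.2 y.2 hxy

/-- The operator `v ↦ (d/dτ + 1)⁻² (g ∘ v)`, whose fixed points are the bounded nondecreasing
solutions of `(d/dτ + 1)² w = g(w)`. -/
noncomputable def profileOperator (h : IsMonostable ρ B δ g) :
    (ℝ →o Icc 0 δ) →o (ℝ →o Icc 0 δ) :=
  (expAvgHom 0 δ).comp ((expAvgHom 0 δ).comp (OrderHom.compₘ h.intervalHom))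

/-- The supersolution `min δ e^(κτ)` with `κ = ρ - 1`. -/
noncomputable def minSupersolution (h : IsMonostable ρ B δ g) : ℝ →o Icc 0 δ where
  toFun τ := ⟨min δ (exp ((ρ - 1) * τ)), le_min h.pos.le (exp_pos _).le, min_le_left _ _⟩
  monotone' _ _ hxy := min_le_min_left δ <|
    exp_le_exp.2 (mul_le_mul_of_nonneg_left hxy (sub_pos.2 h.one_lt).le)

theorem le_minSupersolution_iff (h : IsMonostable ρ B δ g) {v : ℝ →o Icc 0 δ} :
    v ≤ h.minSupersolution ↔ ∀ τ, (v τ : ℝ) ≤ exp ((ρ - 1) * τ) :=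
  forall_congr' fun τ => le_min_iff.trans (and_iff_right (v τ).2.2)

theorem profileOperator_le_exp (h : IsMonostable ρ B δ g) {v : ℝ →o Icc 0 δ}
    (hv : ∀ τ, (v τ : ℝ) ≤ exp ((ρ - 1) * τ)) (τ : ℝ) :
    (h.profileOperator v τ : ℝ) ≤ exp ((ρ - 1) * τ) := by
  have hρ := h.one_lt
  have hrate : -1 < ρ - 1 := by linarith
  have hgv : ∀ r, g (v r) ≤ ρ ^ 2 * exp ((ρ - 1) * r) := fun r =>
    (h.le_tangent _ (v r).2).trans (mul_le_mul_of_nonneg_left (hv r) (sq_nonneg ρ))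
  have havg := expAvgHom_le_const_mul_exp hrate
    (expAvgHom_le_const_mul_exp (v := h.intervalHom.comp v) hrate hgv) τ
  rwa [h.sq_div_one_add_div_one_add, one_mul] at havg

theorem exp_sub_exp_le_comp (h : IsMonostable ρ B δ g) {v : ℝ →o Icc 0 δ}
    (hv : ∀ τ, (v τ : ℝ) ≤ exp ((ρ - 1) * τ)) (hsub : ∀ τ, expSubsolution ρ M τ ≤ v τ) (τ : ℝ) :
    ρ ^ 2 * exp ((ρ - 1) * τ) - (ρ ^ 2 * M + B) * exp (2 * (ρ - 1) * τ) ≤ g (v τ) := by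
  calc ρ ^ 2 * exp ((ρ - 1) * τ) - (ρ ^ 2 * M + B) * exp (2 * (ρ - 1) * τ)
      = ρ ^ 2 * expSubsolution ρ M τ - B * exp ((ρ - 1) * τ) ^ 2 := by
        rw [expSubsolution_eq, exp_two_mul_mul]
        ring
    _ ≤ ρ ^ 2 * v τ - B * (v τ : ℝ) ^ 2 := by
        gcongr
        exacts [hsub τ, h.curvature_pos.le, (v τ).2.1, hv τ]
    _ ≤ g (v τ) := h.parabola_le _ (v τ).2

theorem expSubsolution_le_profileOperator (h : IsMonostable ρ B δ g)
    (hM : ρ ^ 2 * M + B ≤ M * (2 * ρ - 1) ^ 2) {v : ℝ →o Icc 0 δ}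
    (hv : ∀ τ, (v τ : ℝ) ≤ exp ((ρ - 1) * τ)) (hsub : ∀ τ, expSubsolution ρ M τ ≤ v τ) (τ : ℝ) :
    expSubsolution ρ M τ ≤ h.profileOperator v τ := by
  have hρ := h.one_lt
  have hrate : -1 < ρ - 1 := by linarith
  have hrate₂ : -1 < 2 * (ρ - 1) := by linarith
  have havg := exp_sub_exp_le_expAvgHom hrate hrate₂ (exp_sub_exp_le_expAvgHom
    (v := h.intervalHom.comp v) hrate hrate₂ (h.exp_sub_exp_le_comp hv hsub)) τ
  refine le_trans ?_ havg
  have hcoeff₂ : (ρ ^ 2 * M + B) / (1 + 2 * (ρ - 1)) / (1 + 2 * (ρ - 1)) ≤ M := by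
    rw [div_div, div_le_iff₀ (by nlinarith)]
    linarith
  rw [expSubsolution, h.sq_div_one_add_div_one_add, one_mul]
  gcongr

theorem exists_expSubsolution_coeff (h : IsMonostable ρ B δ g) :
    ∃ M, 0 < M ∧ ρ ^ 2 * M + B ≤ M * (2 * ρ - 1) ^ 2 ∧ 1 ≤ 4 * M * δ := by
  have hρ := h.one_lt
  have hδ := h.pos
  have hgap : 0 < (2 * ρ - 1) ^ 2 - ρ ^ 2 := by nlinarith
  refine ⟨max (B / ((2 * ρ - 1) ^ 2 - ρ ^ 2)) (1 / (4 * δ)), by positivity, ?_, ?_⟩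
  · have := (div_le_iff₀ hgap).1
      (le_max_left (B / ((2 * ρ - 1) ^ 2 - ρ ^ 2)) (1 / (4 * δ)))
    linarith
  · have := (div_le_iff₀ (by positivity)).1
      (le_max_right (B / ((2 * ρ - 1) ^ 2 - ρ ^ 2)) (1 / (4 * δ)))
    linarith

theorem exists_fixedPoint_profileOperator (h : IsMonostable ρ B δ g) :
    ∃ w : ℝ →o Icc 0 δ, h.profileOperator w = w ∧ (∀ τ, (w τ : ℝ) ≤ exp ((ρ - 1) * τ)) ∧
      ∃ τ, 0 < (w τ : ℝ) := by
  obtain ⟨M, hM, hMρ, hMδ⟩ := h.exists_expSubsolution_coeff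
  have hsub_le : ∀ τ, expSubsolution ρ M τ ≤ δ := fun τ => by
    nlinarith [four_mul_expSubsolution_le_one ρ M τ]
  have : Fact (0 ≤ δ) := ⟨h.pos.le⟩
  let l : ℝ → Icc 0 δ := fun τ => projIcc 0 δ h.pos.le (expSubsolution ρ M τ)
  have hl_le : ∀ {v : ℝ →o Icc 0 δ}, l ≤ v ↔ ∀ τ, expSubsolution ρ M τ ≤ v τ := fun {v} =>
    forall_congr' fun τ => by
      rw [← Subtype.coe_le_coe, coe_projIcc, min_eq_right (hsub_le τ), max_le_iff,
        and_iff_right (v τ).2.1]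
  obtain ⟨w, hfix, hlw, hw⟩ := exists_fixedPoint_of_subsolution_of_supersolution
    h.profileOperator (l := l) (v := h.minSupersolution)
    (hl_le.2 fun τ => le_min (hsub_le τ) (expSubsolution_le_exp hM.le ρ τ))
    (h.le_minSupersolution_iff.2 <| h.profileOperator_le_exp <| h.le_minSupersolution_iff.1 le_rfl)
    fun v hv hlv => hl_le.2 <|
      h.expSubsolution_le_profileOperator hMρ (h.le_minSupersolution_iff.1 hv) (hl_le.1 hlv)
  obtain ⟨τ, hτ⟩ := exists_expSubsolution_pos (M := M) h.one_lt
  exact ⟨w, hfix, h.le_minSupersolution_iff.1 hw, τ, hτ.trans_le (hl_le.1 hlw τ)⟩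

end IsMonostable

/-- A heteroclinic orbit from `(0, 0)` to `(δ, δ)` inside `[0, δ]²` of the planar system
`w' = -w + u`, `u' = -u + g(w)`. -/
structure IsHeteroclinic (g : ℝ → ℝ) (δ : ℝ) (w u : ℝ → ℝ) : Prop where
  hasDerivAt_fst : ∀ τ, HasDerivAt w (-w τ + u τ) τ
  hasDerivAt_snd : ∀ τ, HasDerivAt u (-u τ + g (w τ)) τ
  fst_mem : ∀ τ, w τ ∈ Icc 0 δ
  snd_mem : ∀ τ, u τ ∈ Icc 0 δ
  tendsto_fst_atBot : Tendsto w atBot (𝓝 0)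
  tendsto_snd_atBot : Tendsto u atBot (𝓝 0)
  tendsto_fst_atTop : Tendsto w atTop (𝓝 δ)
  tendsto_snd_atTop : Tendsto u atTop (𝓝 δ)

namespace IsMonostable

variable {ρ B δ : ℝ} {g : ℝ → ℝ}

theorem tendsto_comp (h : IsMonostable ρ B δ g) {l : Filter ℝ} [l.NeBot] {w : ℝ → ℝ} {L : ℝ}
    (hw : ∀ τ, w τ ∈ Icc 0 δ) (hL : Tendsto w l (𝓝 L)) : Tendsto (fun τ => g (w τ)) l (𝓝 (g L)) :=
  (h.continuousOn L (isClosed_Icc.mem_of_tendsto hL (.of_forall hw))).tendsto.comp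
    (tendsto_nhdsWithin_iff.2 ⟨hL, .of_forall hw⟩)

theorem tendsto_fixedPoint_atTop (h : IsMonostable ρ B δ g) {w : ℝ →o Icc 0 δ}
    (hfix : h.profileOperator w = w) {τ₀ : ℝ} (hpos : 0 < (w τ₀ : ℝ)) :
    Tendsto (fun τ => (w τ : ℝ)) atTop (𝓝 δ) := by
  have hmono := monotone_coe_orderHom w
  have hbdd : BddAbove (range fun τ => (w τ : ℝ)) := ⟨δ, forall_mem_range.2 fun τ => (w τ).2.2⟩
  obtain ⟨L, hL⟩ : ∃ L, Tendsto (fun τ => (w τ : ℝ)) atTop (𝓝 L) :=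
    ⟨_, tendsto_atTop_ciSup hmono hbdd⟩
  have hshift : ∀ t : ℝ, Tendsto (fun τ => τ - t) atTop atTop := fun t =>
    tendsto_atTop_add_const_right _ (-t) tendsto_id
  have hgL : Tendsto (fun τ => (h.profileOperator w τ : ℝ)) atTop (𝓝 (g L)) :=
    tendsto_coe_expAvgHom hshift <| tendsto_coe_expAvgHom (v := h.intervalHom.comp w) hshift <|
      h.tendsto_comp (fun τ => (w τ).2) hL
  rw [hfix] at hgL
  have hLpos : 0 < L := hpos.trans_le (hmono.ge_of_tendsto hL τ₀)
  have hLδ : L ≤ δ := le_of_tendsto' hL fun τ => (w τ).2.2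
  rcases hLδ.eq_or_lt with rfl | hlt
  · exact hL
  · exact absurd (tendsto_nhds_unique hgL hL) (h.ne_self L ⟨hLpos, hlt⟩)

theorem exists_isHeteroclinic (h : IsMonostable ρ B δ g) : ∃ w u, IsHeteroclinic g δ w u := by
  obtain ⟨w, hfix, hexp, τ₀, hτ₀⟩ := h.exists_fixedPoint_profileOperator
  let u : ℝ →o Icc 0 δ := expAvgHom 0 δ (h.intervalHom.comp w)
  have hwu : expAvgHom 0 δ u = w := hfix
  have hcontu : Continuous fun τ => (u τ : ℝ) := continuous_coe_expAvgHom _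
  have hcontw : Continuous fun τ => (w τ : ℝ) := hwu ▸ continuous_coe_expAvgHom u
  have hderivw := hasDerivAt_coe_expAvgHom hcontu
  rw [hwu] at hderivw
  have hbotw : Tendsto (fun τ => (w τ : ℝ)) atBot (𝓝 0) :=
    squeeze_zero (fun τ => (w τ).2.1) hexp
      (tendsto_exp_atBot.comp (tendsto_id.const_mul_atBot (sub_pos.2 h.one_lt)))
  have hbotu : Tendsto (fun τ => (u τ : ℝ)) atBot (𝓝 (g 0)) :=
    tendsto_coe_expAvgHom (v := h.intervalHom.comp w)
      (fun t => tendsto_atBot_add_const_right _ (-t) tendsto_id)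
      (h.tendsto_comp (fun τ => (w τ).2) hbotw)
  have htopw : Tendsto (fun τ => (w τ : ℝ)) atTop (𝓝 δ) :=
    h.tendsto_fixedPoint_atTop hfix hτ₀
  have htopu : Tendsto (fun τ => (u τ : ℝ)) atTop (𝓝 (g δ)) :=
    tendsto_coe_expAvgHom (v := h.intervalHom.comp w)
      (fun t => tendsto_atTop_add_const_right _ (-t) tendsto_id)
      (h.tendsto_comp (fun τ => (w τ).2) htopw)
  rw [h.map_zero] at hbotu
  rw [h.map_right] at htopu
  exact ⟨fun τ => w τ, fun τ => u τ, hderivw,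
    hasDerivAt_coe_expAvgHom (v := h.intervalHom.comp w)
      (h.continuousOn.comp_continuous hcontw fun τ => (w τ).2),
    fun τ => (w τ).2, fun τ => (u τ).2, hbotw, hbotu, htopw, htopu⟩

end IsMonostable

/-! ### The pressure law -/

section PowerLaw

theorem strictConvexOn_rpow_of_neg {q : ℝ} (hq : q < 0) :
    StrictConvexOn ℝ (Ioi 0) fun x : ℝ => x ^ q := by
  have hderiv : ∀ x : ℝ, 0 < x → HasDerivAt (fun x : ℝ => x ^ q) (q * x ^ (q - 1)) x :=
    fun x hx => hasDerivAt_rpow_const (.inl hx.ne')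
  refine StrictMonoOn.strictConvexOn_of_deriv (convex_Ioi 0)
    (fun x hx => (hderiv x hx).continuousAt.continuousWithinAt) ?_
  rw [interior_Ioi]
  intro x hx y hy hxy
  rw [(hderiv x hx).deriv, (hderiv y hy).deriv]
  exact mul_lt_mul_of_neg_left (rpow_lt_rpow_of_neg hx hxy (by linarith)) hq

theorem tangent_lt_rpow_of_neg {q x y : ℝ} (hq : q < 0) (hx : 0 < x) (hy : 0 < y) (hxy : x ≠ y) :
    x ^ q + q * x ^ (q - 1) * (y - x) < y ^ q := by
  have hconvex := strictConvexOn_rpow_of_neg hq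
  have hderiv : HasDerivAt (fun x : ℝ => x ^ q) (q * x ^ (q - 1)) x :=
    hasDerivAt_rpow_const (.inl hx.ne')
  rcases hxy.lt_or_gt with hlt | hgt
  · have hslope := hconvex.lt_slope_of_hasDerivAt hx hy hlt hderiv
    rw [slope_def_field, lt_div_iff₀ (sub_pos.2 hlt)] at hslope
    linarith
  · have hslope := hconvex.slope_lt_of_hasDerivAt hy hx hgt hderiv
    rw [slope_def_field, div_lt_iff₀ (sub_pos.2 hgt)] at hslope
    linarith

theorem tangent_le_rpow_of_neg {q x y : ℝ} (hq : q < 0) (hx : 0 < x) (hy : 0 < y) :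
    x ^ q + q * x ^ (q - 1) * (y - x) ≤ y ^ q := by
  rcases eq_or_ne x y with rfl | hxy
  · simp
  · exact (tangent_lt_rpow_of_neg hq hx hy hxy).le

variable {γ v w : ℝ}

theorem pP_le_pP (hγ : 0 ≤ γ) {v₀ v₁ : ℝ} (hv₀ : 0 < v₀) (hv : v₀ ≤ v₁) : pP γ v₁ ≤ pP γ v₀ :=
  rpow_le_rpow_of_nonpos hv₀ hv (neg_nonpos.2 hγ)

theorem pP_sub_pP_le_tangent (hγ : 0 < γ) (hv : 0 < v) (hw : 0 ≤ w) :
    pP γ v - pP γ (v + w) ≤ γ * v ^ (-γ - 1) * w := by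
  have htangent := tangent_le_rpow_of_neg (neg_lt_zero.2 hγ) hv (y := v + w) (by positivity)
  simp only [pP]
  linarith

theorem pP_sub_pP_lt_tangent (hγ : 0 < γ) (hv : 0 < v) (hw : 0 < w) :
    pP γ v - pP γ (v + w) < γ * v ^ (-γ - 1) * w := by
  have htangent := tangent_lt_rpow_of_neg (neg_lt_zero.2 hγ) hv (y := v + w) (by positivity)
    (by linarith)
  simp only [pP]
  linarith

-- The drop dominates its tangent at `v + w`, whose slope dominates the tangent at `v` of the slope.
theorem parabola_le_pP_sub_pP (hγ : 0 < γ) (hv : 0 < v) (hw : 0 ≤ w) :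
    γ * v ^ (-γ - 1) * w - γ * (γ + 1) * v ^ (-γ - 2) * w ^ 2 ≤ pP γ v - pP γ (v + w) := by
  have hvw : 0 < v + w := by positivity
  have hslope : v ^ (-γ - 1) - (γ + 1) * v ^ (-γ - 2) * w ≤ (v + w) ^ (-γ - 1) := by
    have htangent := tangent_le_rpow_of_neg (q := -γ - 1) (by linarith) hv hvw
    rw [sub_sub, one_add_one_eq_two] at htangent
    linarith
  have hdrop := tangent_le_rpow_of_neg (neg_lt_zero.2 hγ) hvw hv
  simp only [pP]
  linarith [mul_le_mul_of_nonneg_left hslope (mul_nonneg hγ.le hw)]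

theorem chord_lt_pP_sub_pP (hγ : 0 < γ) {v₀ v₁ m : ℝ} (hv₀ : 0 < v₀)
    (hchord : pP γ v₀ - pP γ v₁ = m * (v₁ - v₀)) (hw : w ∈ Ioo 0 (v₁ - v₀)) :
    m * w < pP γ v₀ - pP γ (v₀ + w) := by
  obtain ⟨hw₀, hw₁⟩ := hw
  have hδ : 0 < v₁ - v₀ := hw₀.trans hw₁
  have hsecant := (strictConvexOn_rpow_of_neg (neg_lt_zero.2 hγ)).secant_strict_mono
    (a := v₀) (x := v₀ + w) (y := v₁) hv₀ (add_pos hv₀ hw₀) (by linarith : 0 < v₁)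
    (by linarith) (by linarith) (by linarith)
  have hslope : (v₁ ^ (-γ) - v₀ ^ (-γ)) / (v₁ - v₀) = -m := by
    rw [div_eq_iff hδ.ne']
    simp only [pP] at hchord
    linarith
  rw [hslope, add_sub_cancel_left, div_lt_iff₀ hw₀] at hsecant
  simp only [pP]
  linarith

theorem isMonostable_pP (hγ : 0 < γ) {v₀ v₁ m : ℝ} (hv₀ : 0 < v₀) (hv : v₀ < v₁) (hm : 0 < m)
    (hchord : pP γ v₀ - pP γ v₁ = m * (v₁ - v₀)) :
    IsMonostable √(γ * v₀ ^ (-γ - 1) / m) (γ * (γ + 1) * v₀ ^ (-γ - 2) / m) (v₁ - v₀)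
      fun w => (pP γ v₀ - pP γ (v₀ + w)) / m := by
  have hδ : 0 < v₁ - v₀ := sub_pos.2 hv
  have hsq : √(γ * v₀ ^ (-γ - 1) / m) ^ 2 = γ * v₀ ^ (-γ - 1) / m := sq_sqrt (by positivity)
  constructor
  case one_lt =>
    have hlt := pP_sub_pP_lt_tangent hγ hv₀ hδ
    rw [add_sub_cancel, hchord] at hlt
    rw [lt_sqrt zero_le_one, one_pow, one_lt_div hm]
    exact lt_of_mul_lt_mul_right hlt hδ.le
  case pos => exact hδ
  case monotoneOn =>
    intro w hw z _ hwz
    have hle := pP_le_pP hγ.le (add_pos_of_pos_of_nonneg hv₀ hw.1) (add_le_add_right hwz v₀)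
    exact div_le_div_of_nonneg_right (sub_le_sub_left hle _) hm.le
  case continuousOn =>
    intro w hw
    have hpow : ContinuousAt (fun w => pP γ (v₀ + w)) w :=
      (continuousAt_const.add continuousAt_id).rpow_const
        (.inl (add_pos_of_pos_of_nonneg hv₀ hw.1).ne')
    exact ((continuousAt_const.sub hpow).div_const m).continuousWithinAt
  case le_tangent =>
    intro w hw
    rw [hsq, div_mul_eq_mul_div]
    exact div_le_div_of_nonneg_right (pP_sub_pP_le_tangent hγ hv₀ hw.1) hm.le
  case parabola_le =>
    intro w hw
    rw [hsq, div_mul_eq_mul_div, div_mul_eq_mul_div, ← sub_div]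
    exact div_le_div_of_nonneg_right (parabola_le_pP_sub_pP hγ hv₀ hw.1) hm.le
  case map_right => rw [add_sub_cancel, hchord, mul_div_cancel_left₀ _ hm.ne']
  case ne_self =>
    intro w hw heq
    rw [div_eq_iff hm.ne'] at heq
    linarith [chord_lt_pP_sub_pP hγ hv₀ hchord hw]

end PowerLaw

/-! ### Relaxation shock profiles -/

section Profile

/-- The vector field `(a² - s²)⁻¹ (-s (U - Ul) + F(U) - F(Ul))` of the first-order system to which
the profile equation integrates, the integration constant being fixed by the left state `Ul`. -/
noncomputable def profileField (γ a s : ℝ) (Ul U : ℝ × ℝ) : ℝ × ℝ :=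
  (a ^ 2 - s ^ 2)⁻¹ • ((-s) • (U - Ul) + (Fl γ U - Fl γ Ul))

variable {γ a s : ℝ} {Ul Ur : ℝ × ℝ} {U V : ℝ → ℝ × ℝ}

theorem contDiffAt_Fl (γ : ℝ) {n : WithTop ℕ∞} {P : ℝ × ℝ} (hP : 0 < P.1) :
    ContDiffAt ℝ n (Fl γ) P :=
  contDiffAt_snd.neg.prodMk (contDiffAt_fst.rpow_const_of_ne hP.ne')

theorem contDiffAt_profileField (γ a s : ℝ) (Ul : ℝ × ℝ) {n : WithTop ℕ∞} {P : ℝ × ℝ}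
    (hP : 0 < P.1) : ContDiffAt ℝ n (profileField γ a s Ul) P :=
  (((contDiffAt_id.sub contDiffAt_const).const_smul _).add
    ((contDiffAt_Fl γ hP).sub contDiffAt_const)).const_smul _

theorem profileField_left (γ a s : ℝ) (Ul : ℝ × ℝ) : profileField γ a s Ul Ul = 0 := by
  simp [profileField]

theorem profileField_right (a : ℝ) (hRH : (-s) • (Ur - Ul) + (Fl γ Ur - Fl γ Ul) = 0) :
    profileField γ a s Ul Ur = 0 := by
  rw [profileField, hRH, smul_zero]

theorem IsProfile.first_integral (hU : IsProfile γ a s Ul Ur U) (hl : 0 < Ul.1) (ξ : ℝ) :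
    (a ^ 2 - s ^ 2) • deriv U ξ = (-s) • (U ξ - Ul) + (Fl γ (U ξ) - Fl γ Ul) := by
  obtain ⟨hC2, hpos, -, hode, hbot, -, hbot', -⟩ := hU
  have hdiff : Differentiable ℝ U := hC2.differentiable two_ne_zero
  have hdiff' : Differentiable ℝ (deriv U) :=
    (hC2.iterate_deriv' 1 1).differentiable one_ne_zero
  have hflux : ∀ P : ℝ × ℝ, 0 < P.1 → DifferentiableAt ℝ (Fl γ) P := fun P hP =>
    (contDiffAt_Fl γ hP).differentiableAt one_ne_zero
  have hfluxU : Differentiable ℝ (Fl γ ∘ U) := fun x => (hflux _ (hpos x)).comp x (hdiff x)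
  let G : ℝ → ℝ × ℝ := fun x => (a ^ 2 - s ^ 2) • deriv U x - ((-s) • U x + (Fl γ ∘ U) x)
  have hG : ∀ x, HasDerivAt G 0 x := fun x => by
    have hderiv := ((hdiff' x).hasDerivAt.const_smul (a ^ 2 - s ^ 2)).sub
      (((hdiff x).hasDerivAt.const_smul (-s)).add (hfluxU x).hasDerivAt)
    rwa [hode x, sub_self] at hderiv
  have hconst : G = fun _ => G ξ := funext fun x =>
    is_const_of_deriv_eq_zero (fun x => (hG x).differentiableAt) (fun x => (hG x).deriv) x ξ
  have hlim : Tendsto G atBot (𝓝 ((a ^ 2 - s ^ 2) • 0 - ((-s) • Ul + Fl γ Ul))) :=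
    (hbot'.const_smul _).sub
      ((hbot.const_smul _).add ((hflux Ul hl).continuousAt.tendsto.comp hbot))
  have hvalue : G ξ = (a ^ 2 - s ^ 2) • 0 - ((-s) • Ul + Fl γ Ul) :=
    tendsto_nhds_unique (hconst ▸ tendsto_const_nhds) hlim
  rw [smul_zero, zero_sub, sub_eq_iff_eq_add] at hvalue
  rw [hvalue, Function.comp_apply, smul_sub]
  abel

theorem IsProfile.hasDerivAt (hU : IsProfile γ a s Ul Ur U) (hl : 0 < Ul.1)
    (hc : a ^ 2 - s ^ 2 ≠ 0) (ξ : ℝ) : HasDerivAt U (profileField γ a s Ul (U ξ)) ξ := by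
  rw [profileField, ← hU.first_integral hl, inv_smul_smul₀ hc]
  exact (hU.1.differentiable two_ne_zero ξ).hasDerivAt

theorem isProfile_of_hasDerivAt (hc : a ^ 2 - s ^ 2 ≠ 0) (hl : 0 < Ul.1) (hr : 0 < Ur.1)
    (hRH : (-s) • (Ur - Ul) + (Fl γ Ur - Fl γ Ul) = 0)
    (hU : ∀ ξ, HasDerivAt U (profileField γ a s Ul (U ξ)) ξ) (hpos : ∀ ξ, 0 < (U ξ).1)
    (hbdd : Bornology.IsBounded (range U)) (hbot : Tendsto U atBot (𝓝 Ul))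
    (htop : Tendsto U atTop (𝓝 Ur)) : IsProfile γ a s Ul Ur U := by
  have hdiff : Differentiable ℝ U := fun ξ => (hU ξ).differentiableAt
  have hderiv : deriv U = profileField γ a s Ul ∘ U := funext fun ξ => (hU ξ).deriv
  have hlim : ∀ {l : Filter ℝ} {P : ℝ × ℝ}, 0 < P.1 → profileField γ a s Ul P = 0 →
      Tendsto U l (𝓝 P) → Tendsto (deriv U) l (𝓝 0) := fun hP hzero hl => by
    rw [hderiv, ← hzero]
    exact (contDiffAt_profileField γ a s Ul (n := 0) hP).continuousAt.tendsto.comp hl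
  have hode : ∀ ξ,
      (a ^ 2 - s ^ 2) • deriv (deriv U) ξ = (-s) • deriv U ξ + deriv (Fl γ ∘ U) ξ := fun ξ => by
    have hflux : DifferentiableAt ℝ (Fl γ ∘ U) ξ :=
      ((contDiffAt_Fl γ (hpos ξ)).differentiableAt one_ne_zero).comp ξ (hdiff ξ)
    have hderiv2 : HasDerivAt (profileField γ a s Ul ∘ U)
        ((a ^ 2 - s ^ 2)⁻¹ • ((-s) • deriv U ξ + deriv (Fl γ ∘ U) ξ)) ξ :=
      ((((hdiff ξ).hasDerivAt.sub_const Ul).const_smul (-s)).add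
        (hflux.hasDerivAt.sub_const (Fl γ Ul))).const_smul (a ^ 2 - s ^ 2)⁻¹
    rw [← hderiv] at hderiv2
    rw [hderiv2.deriv, smul_inv_smul₀ hc]
  exact ⟨contDiff_two_of_hasDerivAt (fun ξ => contDiffAt_profileField γ a s Ul (hpos ξ)) hU,
    hpos, hbdd, hode, hbot, htop, hlim hl (profileField_left γ a s Ul) hbot,
    hlim hr (profileField_right a hRH) htop⟩

theorem IsProfile.exists_fst_eq_midpoint (hU : IsProfile γ a s Ul Ur U) (hlt : Ur.1 < Ul.1) :
    ∃ ξ, (U ξ).1 = (Ul.1 + Ur.1) / 2 := by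
  obtain ⟨hC2, -, -, -, hbot, htop, -, -⟩ := hU
  obtain ⟨x, hx⟩ := (hbot.fst_nhds.eventually_const_lt
    (by linarith : (Ul.1 + Ur.1) / 2 < Ul.1)).exists
  obtain ⟨y, hy⟩ := (htop.fst_nhds.eventually_lt_const
    (by linarith : Ur.1 < (Ul.1 + Ur.1) / 2)).exists
  exact mem_range_of_exists_le_of_exists_ge (continuous_fst.comp hC2.continuous)
    ⟨y, hy.le⟩ ⟨x, hx.le⟩

end Profile

section Uniqueness

variable {γ a s : ℝ} {Ul Ur : ℝ × ℝ} {U V : ℝ → ℝ × ℝ}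

theorem sub_mul_pP_sub_pP_nonpos (hγ : 0 ≤ γ) {x y : ℝ} (hx : 0 < x) (hy : 0 < y) :
    (x - y) * (pP γ x - pP γ y) ≤ 0 := by
  rcases le_total x y with h | h
  · exact mul_nonpos_of_nonpos_of_nonneg (sub_nonpos.2 h) (sub_nonneg.2 (pP_le_pP hγ hx h))
  · exact mul_nonpos_of_nonneg_of_nonpos (sub_nonneg.2 h) (sub_nonpos.2 (pP_le_pP hγ hy h))

theorem IsProfile.comp_add_const (hU : IsProfile γ a s Ul Ur U) (h : ℝ) :
    IsProfile γ a s Ul Ur fun ξ => U (ξ + h) := by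
  obtain ⟨hC2, hpos, hbdd, hode, hbot, htop, hbot', htop'⟩ := hU
  have hderiv : (deriv fun ξ => U (ξ + h)) = fun ξ => deriv U (ξ + h) :=
    funext fun ξ => deriv_comp_add_const U h ξ
  have hatBot : Tendsto (fun ξ => ξ + h) atBot atBot :=
    tendsto_atBot_add_const_right _ h tendsto_id
  have hatTop : Tendsto (fun ξ => ξ + h) atTop atTop :=
    tendsto_atTop_add_const_right _ h tendsto_id
  refine ⟨hC2.comp (contDiff_id.add contDiff_const), fun ξ => hpos _,
    hbdd.subset (range_comp_subset_range (fun ξ => ξ + h) U), fun ξ => ?_, hbot.comp hatBot,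
    htop.comp hatTop, hderiv ▸ hbot'.comp hatBot, hderiv ▸ htop'.comp hatTop⟩
  rw [hderiv, deriv_comp_add_const, hode]
  exact congrArg _ (deriv_comp_add_const (Fl γ ∘ U) h ξ).symm

theorem IsProfile.hasDerivAt_fst_sub (hU : IsProfile γ a s Ul Ur U) (hV : IsProfile γ a s Ul Ur V)
    (hl : 0 < Ul.1) (hc : a ^ 2 - s ^ 2 ≠ 0) (ξ : ℝ) :
    HasDerivAt (fun ξ => (U ξ).1 - (V ξ).1)
      ((a ^ 2 - s ^ 2)⁻¹ * (-s * ((U ξ).1 - (V ξ).1) - ((U ξ).2 - (V ξ).2))) ξ := by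
  have hderiv := (hU.hasDerivAt hl hc ξ).sub (hV.hasDerivAt hl hc ξ)
  refine (hasFDerivAt_fst.comp_hasDerivAt ξ hderiv).congr_deriv ?_
  simp only [profileField, Fl, ContinuousLinearMap.coe_fst', Prod.smul_fst, Prod.fst_add,
    Prod.fst_sub, smul_eq_mul]
  ring

theorem IsProfile.hasDerivAt_snd_sub (hU : IsProfile γ a s Ul Ur U) (hV : IsProfile γ a s Ul Ur V)
    (hl : 0 < Ul.1) (hc : a ^ 2 - s ^ 2 ≠ 0) (ξ : ℝ) :
    HasDerivAt (fun ξ => (U ξ).2 - (V ξ).2)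
      ((a ^ 2 - s ^ 2)⁻¹ * (-s * ((U ξ).2 - (V ξ).2) + (pP γ (U ξ).1 - pP γ (V ξ).1))) ξ := by
  have hderiv := (hU.hasDerivAt hl hc ξ).sub (hV.hasDerivAt hl hc ξ)
  refine (hasFDerivAt_snd.comp_hasDerivAt ξ hderiv).congr_deriv ?_
  simp only [profileField, Fl, ContinuousLinearMap.coe_snd', Prod.smul_snd, Prod.snd_add,
    Prod.snd_sub, smul_eq_mul]
  ring

theorem IsProfile.eq_of_fst_eq (hγ : 0 ≤ γ) (hs : s < 0) (hc : 0 < a ^ 2 - s ^ 2) (hl : 0 < Ul.1)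
    (hU : IsProfile γ a s Ul Ur U) (hV : IsProfile γ a s Ul Ur V) {ξ₀ : ℝ}
    (hξ₀ : (U ξ₀).1 = (V ξ₀).1) : U = V := by
  obtain ⟨CU, hCU⟩ := hU.2.2.1.exists_norm_le
  obtain ⟨CV, hCV⟩ := hV.2.2.1.exists_norm_le
  have hbdd : ∀ ξ, |(U ξ).1 - (V ξ).1| ≤ CU + CV := fun ξ => (abs_sub _ _).trans <|
    add_le_add ((norm_fst_le _).trans (hCU _ (mem_range_self ξ)))
      ((norm_fst_le _).trans (hCV _ (mem_range_self ξ)))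
  obtain ⟨hfst, hsnd⟩ := eq_zero_of_hasDerivAt_of_mul_nonpos (neg_pos.2 hs) hc
    (hU.hasDerivAt_fst_sub hV hl hc.ne') (hU.hasDerivAt_snd_sub hV hl hc.ne')
    (fun ξ => sub_mul_pP_sub_pP_nonpos hγ (hU.2.1 ξ) (hV.2.1 ξ)) hbdd (sub_eq_zero.2 hξ₀)
    (lt_add_one ξ₀)
  exact eq_of_hasDerivAt_of_contDiffAt (fun ξ => contDiffAt_profileField γ a s Ul (hU.2.1 ξ))
    (hU.hasDerivAt hl hc.ne') (hV.hasDerivAt hl hc.ne')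
    (Prod.ext (sub_eq_zero.1 hfst) (sub_eq_zero.1 hsnd))

theorem IsProfile.exists_eq_comp_add_const (hγ : 0 ≤ γ) (hs : s < 0) (hc : 0 < a ^ 2 - s ^ 2)
    (hl : 0 < Ul.1) (hlt : Ur.1 < Ul.1) (hU : IsProfile γ a s Ul Ur U)
    (hV : IsProfile γ a s Ul Ur V) : ∃ h, ∀ ξ, V ξ = U (ξ + h) := by
  obtain ⟨x, hx⟩ := hU.exists_fst_eq_midpoint hlt
  obtain ⟨y, hy⟩ := hV.exists_fst_eq_midpoint hlt
  refine ⟨x - y, congrFun (hV.eq_of_fst_eq hγ hs hc hl (hU.comp_add_const (x - y)) (ξ₀ := y) ?_)⟩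
  rw [add_sub_cancel, hx, hy]

end Uniqueness

section Existence

theorem Fl_rankineHugoniot {γ s v₀ u₀ v₁ u₁ : ℝ} (h₁ : -s * (v₀ - v₁) - (u₀ - u₁) = 0)
    (h₂ : -s * (u₀ - u₁) + (pP γ v₀ - pP γ v₁) = 0) :
    (-s) • ((v₀, u₀) - (v₁, u₁)) + (Fl γ (v₀, u₀) - Fl γ (v₁, u₁)) = 0 := by
  refine Prod.ext ?_ h₂
  simp only [Fl, Prod.fst_add, Prod.smul_fst, Prod.fst_sub, Prod.fst_zero, smul_eq_mul]
  linarith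

variable {γ a s v₀ u₀ v₁ u₁ : ℝ} {w u : ℝ → ℝ}

/-- The curve `ξ ↦ (v₀ + w(τ), u₀ - s u(τ))` with `τ = s ξ / (a² - s²)`: this affine change of
variables carries the planar system of `IsHeteroclinic` to the profile equation and, for `s < 0`,
reverses orientation. -/
noncomputable def shockCurve (a s v₀ u₀ : ℝ) (w u : ℝ → ℝ) (ξ : ℝ) : ℝ × ℝ :=
  (v₀ + w (s / (a ^ 2 - s ^ 2) * ξ), u₀ - s * u (s / (a ^ 2 - s ^ 2) * ξ))

theorem hasDerivAt_shockCurve (hs : s ≠ 0) (h₁ : -s * (v₀ - v₁) - (u₀ - u₁) = 0)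
    (h₂ : -s * (u₀ - u₁) + (pP γ v₀ - pP γ v₁) = 0)
    (hw : ∀ τ, HasDerivAt w (-w τ + u τ) τ)
    (hu : ∀ τ, HasDerivAt u (-u τ + (pP γ v₀ - pP γ (v₀ + w τ)) / s ^ 2) τ) (ξ : ℝ) :
    HasDerivAt (shockCurve a s v₀ u₀ w u)
      (profileField γ a s (v₁, u₁) (shockCurve a s v₀ u₀ w u ξ)) ξ := by
  have hτ : HasDerivAt (fun ξ => s / (a ^ 2 - s ^ 2) * ξ) (s / (a ^ 2 - s ^ 2)) ξ := by
    simpa using (hasDerivAt_id ξ).const_mul (s / (a ^ 2 - s ^ 2))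
  refine ((((hw _).comp ξ hτ).const_add v₀).prodMk
    ((((hu _).comp ξ hτ).const_mul s).const_sub u₀)).congr_deriv (Prod.ext ?_ ?_)
  · simp only [shockCurve, profileField, Fl, Prod.smul_fst, Prod.fst_add, Prod.fst_sub,
      smul_eq_mul]
    linear_combination -(a ^ 2 - s ^ 2)⁻¹ * h₁
  · simp only [shockCurve, profileField, Fl, Prod.smul_snd, Prod.snd_add, Prod.snd_sub,
      smul_eq_mul]
    field_simp
    linear_combination -(a ^ 2 - s ^ 2)⁻¹ * h₂

theorem isBounded_range_shockCurve {δ : ℝ} (hw : ∀ τ, w τ ∈ Icc 0 δ) (hu : ∀ τ, u τ ∈ Icc 0 δ) :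
    Bornology.IsBounded (range (shockCurve a s v₀ u₀ w u)) := by
  have hcompact : IsCompact ((fun P : ℝ × ℝ => (v₀ + P.1, u₀ - s * P.2)) '' Icc 0 δ ×ˢ Icc 0 δ) :=
    (isCompact_Icc.prod isCompact_Icc).image (by fun_prop)
  exact hcompact.isBounded.subset <| range_subset_iff.2 fun ξ => ⟨(w _, u _), ⟨hw _, hu _⟩, rfl⟩

theorem tendsto_shockCurve {l l' : Filter ℝ} {x y : ℝ}
    (hl : Tendsto (fun ξ => s / (a ^ 2 - s ^ 2) * ξ) l l') (hw : Tendsto w l' (𝓝 x))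
    (hu : Tendsto u l' (𝓝 y)) :
    Tendsto (shockCurve a s v₀ u₀ w u) l (𝓝 (v₀ + x, u₀ - s * y)) :=
  ((hw.comp hl).const_add v₀).prodMk_nhds (((hu.comp hl).const_mul s).const_sub u₀)

theorem exists_isProfile (hγ : 0 < γ) (hs : s < 0) (hc : 0 < a ^ 2 - s ^ 2) (hv₀ : 0 < v₀)
    (hv : v₀ < v₁) (h₁ : -s * (v₀ - v₁) - (u₀ - u₁) = 0)
    (h₂ : -s * (u₀ - u₁) + (pP γ v₀ - pP γ v₁) = 0) :
    ∃ U, IsProfile γ a s (v₁, u₁) (v₀, u₀) U := by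
  have hchord : pP γ v₀ - pP γ v₁ = s ^ 2 * (v₁ - v₀) := by linear_combination h₂ - s * h₁
  obtain ⟨w, u, horbit⟩ :=
    (isMonostable_pP hγ hv₀ hv (sq_pos_of_neg hs) hchord).exists_isHeteroclinic
  have hrate : s / (a ^ 2 - s ^ 2) < 0 := div_neg_of_neg_of_pos hs hc
  have hbot := tendsto_shockCurve (v₀ := v₀) (u₀ := u₀)
    (tendsto_id.const_mul_atBot_of_neg hrate) horbit.tendsto_fst_atTop horbit.tendsto_snd_atTop
  have htop := tendsto_shockCurve (v₀ := v₀) (u₀ := u₀)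
    (tendsto_id.const_mul_atTop_of_neg hrate) horbit.tendsto_fst_atBot horbit.tendsto_snd_atBot
  rw [add_sub_cancel, (by linarith : u₀ - s * (v₁ - v₀) = u₁)] at hbot
  rw [add_zero, mul_zero, sub_zero] at htop
  exact ⟨shockCurve a s v₀ u₀ w u, isProfile_of_hasDerivAt hc.ne' (hv₀.trans hv) hv₀
    (Fl_rankineHugoniot h₁ h₂)
    (hasDerivAt_shockCurve hs.ne h₁ h₂ horbit.hasDerivAt_fst horbit.hasDerivAt_snd)
    (fun ξ => add_pos_of_pos_of_nonneg hv₀ (horbit.fst_mem _).1)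
    (isBounded_range_shockCurve horbit.fst_mem horbit.snd_mem) hbot htop⟩

end Existence

theorem lt_of_lam1_lt_lam1 {γ v₀ v₁ : ℝ} (hγ : 0 ≤ γ) (hv₁ : 0 < v₁)
    (h : lam1 γ v₀ < lam1 γ v₁) : v₀ < v₁ := by
  contrapose! h
  have hpow := rpow_le_rpow_of_nonpos hv₁ h (show -γ - 1 ≤ 0 by linarith)
  exact neg_le_neg (sqrt_le_sqrt (mul_le_mul_of_nonneg_left hpow hγ))

theorem relaxation_shock_exists_unique_up_to_shift_general
    (γ a s₁ : ℝ) (hγ : 0 < γ) (vs us vp up : ℝ) (hvp : 0 < vp)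
    (hRH1 : -s₁ * (vp - vs) - (up - us) = 0)
    (hRH2 : -s₁ * (up - us) + (pP γ vp - pP γ vs) = 0)
    (hs₁ : s₁ < 0) (hlt : vp < vs) (ha : s₁ ^ 2 < a ^ 2) :
    (∃ U : ℝ → ℝ × ℝ, IsProfile γ a s₁ (vs, us) (vp, up) U) ∧
    (∀ U Ubar : ℝ → ℝ × ℝ,
      IsProfile γ a s₁ (vs, us) (vp, up) U →
      IsProfile γ a s₁ (vs, us) (vp, up) Ubar →
      ∃ h : ℝ, ∀ ξ : ℝ, Ubar ξ = U (ξ + h)) :=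
  ⟨exists_isProfile hγ hs₁ (sub_pos.2 ha) hvp hlt hRH1 hRH2, fun _ _ hU hUbar =>
    hU.exists_eq_comp_add_const hγ.le hs₁ (sub_pos.2 ha) (hvp.trans hlt) hlt hUbar⟩

/-- existence and uniqueness-up-to-shift of the 1-relaxation shock profile. -/
theorem relaxation_shock_exists_unique_up_to_shift
    (γ a s₁ : ℝ) (hγ : 1 < γ) (ha : 0 < a)
    (vs us vp up : ℝ) (hvs : 0 < vs) (hvp : 0 < vp)
    (hRH1 : -s₁ * (vp - vs) - (up - us) = 0)
    (hRH2 : -s₁ * (up - us) + (pP γ vp - pP γ vs) = 0)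
    (hLax1 : lam1 γ vp < s₁) (hLax2 : s₁ < lam1 γ vs) (hLax3 : lam1 γ vs < 0)
    (hsub : ∀ v ∈ Set.uIcc vs vp, Real.sqrt (γ * v ^ (-γ - 1)) < a) :
    (∃ U : ℝ → ℝ × ℝ, IsProfile γ a s₁ (vs, us) (vp, up) U) ∧
    (∀ U Ubar : ℝ → ℝ × ℝ,
      IsProfile γ a s₁ (vs, us) (vp, up) U →
      IsProfile γ a s₁ (vs, us) (vp, up) Ubar →
      ∃ h : ℝ, ∀ ξ : ℝ, Ubar ξ = U (ξ + h)) := by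
  have hγ₀ : 0 < γ := one_pos.trans hγ
  have hs₁ : s₁ < 0 := hLax2.trans hLax3
  have hs₁a : -a < s₁ := (neg_lt_neg (hsub vp Set.right_mem_uIcc)).trans hLax1
  exact relaxation_shock_exists_unique_up_to_shift_general γ a s₁ hγ₀ vs us vp up hvp hRH1 hRH2 hs₁
    (lt_of_lam1_lt_lam1 hγ₀.le hvs (hLax1.trans hLax2)) (sq_lt_sq' hs₁a (hs₁.trans ha))
end

section
/- Fix γ > 1 and a base state v̄ > 0. There exist δ₀ > 0 and C > 0 such that the following holds. Let U₋ = (v₋,u₋), U* = (v*,u*), U₊ = (v₊,u₊) with v₋, v*, v₊ ∈ [v̄/2, 2v̄] and speeds s₁, s₂ satisfy the incoming Rankine–Hugoniot conditions −s₁(U₊ − U*) + F(U₊) − F(U*) = 0 and −s₂(U* − U₋) + F(U*) − F(U₋) = 0 together with the Lax conditions λ₁(v₊) < s₁ < λ₁(v*) < 0 < λ₂(v*) < s₂ < λ₂(v₋), and suppose the strengths δ₁ = |U₊ − U*| and δ₂ = |U* − U₋| satisfy δ₁, δ₂ ≤ δ₀. Then there exist a state Ũ* = (ṽ*, ũ*)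 with ṽ* > 0 and speeds s̃₁, s̃₂ satisfying the outgoing Rankine–Hugoniot conditions −s̃₁(Ũ* − U₋) + F(Ũ*) − F(U₋) = 0 and −s̃₂(U₊ − Ũ*) + F(U₊) − F(Ũ*) = 0 together with the Lax conditions λ₁(ṽ*) < s̃₁ < λ₁(v₋) < 0 < λ₂(v₊) < s̃₂ < λ₂(ṽ*), and the outgoing strengths δ̃₁ = |Ũ* − U₋|, δ̃₂ = |U₊ − Ũ*| satisfy |δ̃₁ − δ₁| ≤ C δ₁ δ₂ and |δ̃₂ − δ₂| ≤ C δ₁ δ₂. -/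
open Real

/-!
Two states joined by a shock are determined by their specific volumes `x < y`: the speed is
`± shockSpeed p x y` and the velocity drops by `velocityJump p x y`. For incoming volumes `a`, `m`,
`b` the outgoing middle volume `w` therefore solves the scalar equation
`velocityJump p w a + velocityJump p w b = velocityJump p b m + velocityJump p a m`.
The parallelogram point `a + b - m` reproduces the widths `m - b` and `m - a` of the incoming shocks
exactly, and by convexity its velocity jumps exceed the incoming ones by at most a multiple of the
second difference `p (a + b - m) - p a - p b + p m = O((m - b) * (m - a))`. As velocity jumps
decrease in `w` with slope bounded away from zero, the solution `w` lies within
`O((m - b) * (m - a))` of that point.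
-/

open Set
open scoped NNReal

/-- A pressure law of a strictly hyperbolic, genuinely nonlinear p-system, with `r = -p'` as a
separate argument, so that the characteristic speeds are `± √(r v)`. Local Lipschitz continuity of
`r` takes the place of a bound on `p''`. -/
structure IsPressureLaw (p r : ℝ → ℝ) : Prop where
  hasDerivAt {v : ℝ} (hv : 0 < v) : HasDerivAt p (-r v) v
  pos {v : ℝ} (hv : 0 < v) : 0 < r v
  strictAntiOn : StrictAntiOn r (Ioi 0)
  locallyLipschitzOn : LocallyLipschitzOn (Ioi 0) r

/-- The flux of the p-system with pressure `p`, at the state `(v, u)`. -/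
def flux (p : ℝ → ℝ) (U : ℝ × ℝ) : ℝ × ℝ := (-U.2, p U.1)

/-- A 1-shock of speed `s` from the left state `U` to the right state `V`: the Rankine–Hugoniot
condition and the Lax inequalities. -/
structure IsOneShock (p r : ℝ → ℝ) (U V : ℝ × ℝ) (s : ℝ) : Prop where
  rankineHugoniot : (-s) • (V - U) + (flux p V - flux p U) = 0
  lax_right : -√(r V.1) < s
  lax_left : s < -√(r U.1)

/-- A 2-shock of speed `s` from the left state `U` to the right state `V`: the Rankine–Hugoniot
condition and the Lax inequalities. -/
structure IsTwoShock (p r : ℝ → ℝ) (U V : ℝ × ℝ) (s : ℝ) : Prop where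
  rankineHugoniot : (-s) • (V - U) + (flux p V - flux p U) = 0
  lax_right : √(r V.1) < s
  lax_left : s < √(r U.1)

/-- The absolute speed of a shock joining the specific volumes `x` and `y`. -/
noncomputable def shockSpeed (p : ℝ → ℝ) (x y : ℝ) : ℝ := √(-slope p x y)

/-- The absolute velocity jump across a shock joining the specific volumes `x` and `y`. -/
noncomputable def velocityJump (p : ℝ → ℝ) (x y : ℝ) : ℝ := √((p x - p y) * (y - x))

/-- The strength, in the supremum norm on states, of a shock joining the specific volumes
`x ≤ y`. -/
noncomputable def shockStrength (p : ℝ → ℝ) (x y : ℝ) : ℝ := max (y - x) (velocityJump p x y)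

section VelocityJump

variable {p : ℝ → ℝ} {x y x' y' c : ℝ}

theorem velocityJump_nonneg : 0 ≤ velocityJump p x y := sqrt_nonneg _

@[simp]
theorem velocityJump_self : velocityJump p x x = 0 := by simp [velocityJump]

theorem velocityJump_eq_mul_shockSpeed (hxy : x ≤ y) :
    velocityJump p x y = (y - x) * shockSpeed p x y := by
  have hslope : (y - x) * slope p x y = p y - p x := sub_smul_slope p x y
  have hsq : (p x - p y) * (y - x) = (y - x) ^ 2 * -slope p x y := by
    linear_combination (y - x) * hslope
  rw [velocityJump, shockSpeed, hsq, sqrt_mul (sq_nonneg _), sqrt_sq (sub_nonneg.2 hxy)]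

theorem velocityJump_le_of_width_eq (hxy : x ≤ y) (hwidth : y - x = y' - x')
    (hp : p x' - p y' ≤ p x - p y) : velocityJump p x' y' ≤ velocityJump p x y := by
  rw [velocityJump, velocityJump, ← hwidth]
  exact sqrt_le_sqrt (mul_le_mul_of_nonneg_right hp (sub_nonneg.2 hxy))

theorem shockSpeed_mul_velocityJump (hxy : x ≤ y) (hslope : slope p x y ≤ 0) :
    shockSpeed p x y * velocityJump p x y = p x - p y := by
  have hsq : shockSpeed p x y * shockSpeed p x y = -slope p x y :=
    mul_self_sqrt (neg_nonneg.2 hslope)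
  have hdiff : (y - x) * slope p x y = p y - p x := sub_smul_slope p x y
  rw [velocityJump_eq_mul_shockSpeed hxy]
  linear_combination (y - x) * hsq - hdiff

-- For equal widths `l` the squared jumps `l * (p x - p y)` differ by `l` times the pressure
-- difference, while the sum of the jumps is at least `2 * c * l`.
theorem velocityJump_sub_le_of_width_eq (hxy : x < y) (hwidth : y - x = y' - x')
    (hslope : slope p x y ≤ 0) (hslope' : slope p x' y' ≤ 0) (hc : 0 < c)
    (hcs : c ≤ shockSpeed p x y) (hcs' : c ≤ shockSpeed p x' y')
    (hp : p x' - p y' ≤ p x - p y) :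
    velocityJump p x y - velocityJump p x' y' ≤ (p x - p y - (p x' - p y')) / (2 * c) := by
  have hxy' : x' < y' := by linarith
  have hjump_le := velocityJump_le_of_width_eq hxy.le hwidth hp
  have hfactor : (velocityJump p x y - velocityJump p x' y') *
      (shockSpeed p x y + shockSpeed p x' y') = p x - p y - (p x' - p y') := by
    rw [← shockSpeed_mul_velocityJump hxy.le hslope, ← shockSpeed_mul_velocityJump hxy'.le hslope',
      velocityJump_eq_mul_shockSpeed hxy.le, velocityJump_eq_mul_shockSpeed hxy'.le, ← hwidth]
    ring
  rw [le_div_iff₀ (by positivity), ← hfactor]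
  exact mul_le_mul_of_nonneg_left (by linarith) (sub_nonneg.2 hjump_le)

theorem sub_le_shockStrength : y - x ≤ shockStrength p x y := le_max_left _ _

end VelocityJump

namespace IsPressureLaw

variable {p r : ℝ → ℝ} {x x' y z a b m w c : ℝ} {K : ℝ≥0}

theorem continuousOn (hp : IsPressureLaw p r) : ContinuousOn p (Ioi 0) :=
  fun _ hv => (hp.hasDerivAt hv).continuousAt.continuousWithinAt

theorem strictConvexOn (hp : IsPressureLaw p r) : StrictConvexOn ℝ (Ioi 0) p := by
  refine StrictMonoOn.strictConvexOn_of_deriv (convex_Ioi 0) hp.continuousOn ?_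
  rw [interior_Ioi]
  intro v hv w hw hvw
  rw [(hp.hasDerivAt hv).deriv, (hp.hasDerivAt hw).deriv]
  exact neg_lt_neg (hp.strictAntiOn hv hw hvw)

theorem neg_slope_mem_Ioo (hp : IsPressureLaw p r) (hx : 0 < x) (hxy : x < y) :
    -slope p x y ∈ Ioo (r y) (r x) :=
  have hy : 0 < y := hx.trans hxy
  ⟨lt_neg_of_lt_neg (hp.strictConvexOn.slope_lt_of_hasDerivAt hx hy hxy (hp.hasDerivAt hy)),
    neg_lt.1 (hp.strictConvexOn.lt_slope_of_hasDerivAt hx hy hxy (hp.hasDerivAt hx))⟩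

theorem slope_neg (hp : IsPressureLaw p r) (hx : 0 < x) (hxy : x < y) : slope p x y < 0 :=
  neg_pos.1 ((hp.pos (hx.trans hxy)).trans (hp.neg_slope_mem_Ioo hx hxy).1)

theorem pressure_strictAntiOn (hp : IsPressureLaw p r) : StrictAntiOn p (Ioi 0) :=
  fun _ hx _ _ hxy => (slope_neg_iff_of_le hxy.le).1 (hp.slope_neg hx hxy)

theorem sqrt_lt_sqrt_iff (hp : IsPressureLaw p r) (hx : 0 < x) (hy : 0 < y) :
    √(r y) < √(r x) ↔ x < y := by
  rw [Real.sqrt_lt_sqrt_iff (hp.pos hy).le, hp.strictAntiOn.lt_iff_gt hy hx]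

theorem shockSpeed_mem_Ioo (hp : IsPressureLaw p r) (hx : 0 < x) (hxy : x < y) :
    shockSpeed p x y ∈ Ioo √(r y) √(r x) :=
  have hslope := hp.neg_slope_mem_Ioo hx hxy
  ⟨sqrt_lt_sqrt (hp.pos (hx.trans hxy)).le hslope.1,
    sqrt_lt_sqrt (neg_pos.2 (hp.slope_neg hx hxy)).le hslope.2⟩

theorem shockSpeed_le_shockSpeed (hp : IsPressureLaw p r) (hx : 0 < x) (hxx' : x ≤ x')
    (hx'y : x' < y) : shockSpeed p x' y ≤ shockSpeed p x y := by
  have hslope : slope p y x ≤ slope p y x' := by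
    simpa only [slope_def_field] using hp.strictConvexOn.convexOn.secant_mono
      (hx.trans_le (hxx'.trans hx'y.le)) hx (hx.trans_le hxx')
      (hxx'.trans_lt hx'y).ne hx'y.ne hxx'
  rw [shockSpeed, shockSpeed, slope_comm p x', slope_comm p x]
  exact sqrt_le_sqrt (neg_le_neg hslope)

theorem sqrt_mul_sub_le_velocityJump_sub (hp : IsPressureLaw p r) (hx : 0 < x) (hxx' : x ≤ x')
    (hx'y : x' < y) : √(r y) * (x' - x) ≤ velocityJump p x y - velocityJump p x' y := by
  have hmono := hp.shockSpeed_le_shockSpeed hx hxx' hx'y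
  have hlower := (hp.shockSpeed_mem_Ioo (hx.trans_le hxx') hx'y).1
  calc √(r y) * (x' - x)
      ≤ (x' - x) * shockSpeed p x y + (y - x') * (shockSpeed p x y - shockSpeed p x' y) := by
        nlinarith
    _ = velocityJump p x y - velocityJump p x' y := by
        rw [velocityJump_eq_mul_shockSpeed (hxx'.trans hx'y.le),
          velocityJump_eq_mul_shockSpeed hx'y.le]
        ring

theorem velocityJump_lt_velocityJump (hp : IsPressureLaw p r) (hx : 0 < x) (hxy : x ≤ y)
    (hyz : y < z) : velocityJump p x y < velocityJump p x z := by
  have hy : 0 < y := hx.trans_le hxy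
  have hpxy : p y ≤ p x := hp.pressure_strictAntiOn.antitoneOn hx hy hxy
  have hpyz : p z < p y := hp.pressure_strictAntiOn hy (hy.trans hyz) hyz
  refine sqrt_lt_sqrt (mul_nonneg (by linarith) (by linarith)) ?_
  exact mul_lt_mul_of_nonneg_of_pos' (by linarith) (by linarith) (by linarith) (by linarith)

theorem continuousOn_velocityJump_left (hp : IsPressureLaw p r) (y : ℝ) :
    ContinuousOn (fun x => velocityJump p x y) (Ioi 0) :=
  ((hp.continuousOn.sub continuousOn_const).mul
    (continuousOn_const.sub continuousOn_id)).sqrt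

theorem exists_second_difference_eq (hp : IsPressureLaw p r) (hw : 0 < a + b - m) (ham : a < m)
    (hbm : b < m) :
    ∃ ξ ∈ Ioo (a + b - m) b,
      p (a + b - m) - p a - p b + p m = (m - a) * (r ξ - r (ξ + (m - b))) := by
  have hderiv (z : ℝ) (hz : 0 < z) :
      HasDerivAt (fun z => p (z + (m - b)) - p z) (-r (z + (m - b)) - -r z) z :=
    ((hp.hasDerivAt (add_pos hz (sub_pos.2 hbm))).comp_add_const z (m - b)).sub (hp.hasDerivAt hz)
  obtain ⟨ξ, hξ, hslope⟩ := exists_hasDerivAt_eq_slope _ _ (show a + b - m < b by linarith)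
    (fun z hz => (hderiv z (hw.trans_le hz.1)).continuousAt.continuousWithinAt)
    (fun z hz => hderiv z (hw.trans hz.1))
  refine ⟨ξ, hξ, ?_⟩
  rw [add_sub_cancel b m, show a + b - m + (m - b) = a by ring,
    show b - (a + b - m) = m - a by ring, eq_div_iff (sub_pos.2 ham).ne'] at hslope
  linear_combination -hslope

theorem second_difference_nonneg (hp : IsPressureLaw p r) (hw : 0 < a + b - m) (ham : a < m)
    (hbm : b < m) : 0 ≤ p (a + b - m) - p a - p b + p m := by
  obtain ⟨ξ, hξ, heq⟩ := hp.exists_second_difference_eq hw ham hbm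
  have hξ_pos : 0 < ξ := hw.trans hξ.1
  have hshift : ξ < ξ + (m - b) := lt_add_of_pos_right ξ (sub_pos.2 hbm)
  rw [heq]
  exact mul_nonneg (sub_nonneg.2 ham.le)
    (sub_nonneg.2 (hp.strictAntiOn hξ_pos (hξ_pos.trans hshift) hshift).le)

theorem second_difference_le (hp : IsPressureLaw p r) (hw : 0 < a + b - m) (ham : a < m)
    (hbm : b < m) (hK : LipschitzOnWith K r (Icc (a + b - m) m)) :
    p (a + b - m) - p a - p b + p m ≤ K * ((m - b) * (m - a)) := by
  obtain ⟨ξ, hξ, heq⟩ := hp.exists_second_difference_eq hw ham hbm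
  have hr : r ξ - r (ξ + (m - b)) ≤ K * (m - b) := by
    calc r ξ - r (ξ + (m - b)) ≤ dist (r ξ) (r (ξ + (m - b))) := le_abs_self _
      _ ≤ K * dist ξ (ξ + (m - b)) :=
        hK.dist_le_mul _ ⟨hξ.1.le, by linarith [hξ.2]⟩ _
          ⟨by linarith [hξ.1], by linarith [hξ.2]⟩
      _ = K * (m - b) := by rw [dist_self_add_right, norm_of_nonneg (sub_nonneg.2 hbm.le)]
  calc p (a + b - m) - p a - p b + p m = (m - a) * (r ξ - r (ξ + (m - b))) := heq
    _ ≤ (m - a) * (K * (m - b)) := mul_le_mul_of_nonneg_left hr (sub_nonneg.2 ham.le)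
    _ = K * ((m - b) * (m - a)) := by ring

theorem velocityJump_le_parallelogram (hp : IsPressureLaw p r) (hw : 0 < a + b - m) (ham : a < m)
    (hbm : b < m) : velocityJump p b m ≤ velocityJump p (a + b - m) a :=
  velocityJump_le_of_width_eq (by linarith) (by ring)
    (by linarith [hp.second_difference_nonneg hw ham hbm])

theorem velocityJump_parallelogram_sub_le (hp : IsPressureLaw p r) (hw : 0 < a + b - m)
    (ham : a < m) (hbm : b < m) (hK : LipschitzOnWith K r (Icc (a + b - m) m)) (hc : 0 < c)
    (hcm : c ≤ √(r m)) :
    velocityJump p (a + b - m) a - velocityJump p b m ≤ K / (2 * c) * ((m - b) * (m - a)) := by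
  have hb : 0 < b := by linarith
  have hwa : a + b - m < a := by linarith
  have ha : 0 < a := hw.trans hwa
  have hca : c ≤ √(r a) := hcm.trans ((hp.sqrt_lt_sqrt_iff ha (ha.trans ham)).2 ham).le
  have hle := velocityJump_sub_le_of_width_eq hwa (by ring) (hp.slope_neg hw hwa).le
    (hp.slope_neg hb hbm).le hc (hca.trans (hp.shockSpeed_mem_Ioo hw hwa).1.le)
    (hcm.trans (hp.shockSpeed_mem_Ioo hb hbm).1.le)
    (by linarith [hp.second_difference_nonneg hw ham hbm])
  refine hle.trans ?_
  rw [div_mul_eq_mul_div]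
  gcongr
  linarith [hp.second_difference_le hw ham hbm hK]

theorem velocityJump_min_add_lt (hp : IsPressureLaw p r) (ha : 0 < a) (hb : 0 < b) (ham : a < m)
    (hbm : b < m) :
    velocityJump p (min a b) a + velocityJump p (min a b) b <
      velocityJump p b m + velocityJump p a m := by
  rcases le_total a b with hab | hba
  · rw [min_eq_left hab, velocityJump_self, zero_add]
    exact lt_add_of_nonneg_of_lt velocityJump_nonneg (hp.velocityJump_lt_velocityJump ha hab hbm)
  · rw [min_eq_right hba, velocityJump_self, add_zero]
    exact lt_add_of_lt_of_nonneg (hp.velocityJump_lt_velocityJump hb hba ham) velocityJump_nonneg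

theorem exists_middle_volume (hp : IsPressureLaw p r) (hw : 0 < a + b - m) (ham : a < m)
    (hbm : b < m) :
    ∃ w ∈ Ico (a + b - m) (min a b),
      velocityJump p w a + velocityJump p w b = velocityJump p b m + velocityJump p a m := by
  have hmin : a + b - m ≤ min a b := le_min (by linarith) (by linarith)
  have hcont : ContinuousOn (fun w => velocityJump p w a + velocityJump p w b)
      (Icc (a + b - m) (min a b)) :=
    ((hp.continuousOn_velocityJump_left a).add (hp.continuousOn_velocityJump_left b)).mono
      fun _ hx => hw.trans_le hx.1
  have hleft : velocityJump p b m + velocityJump p a m ≤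
      velocityJump p (a + b - m) a + velocityJump p (a + b - m) b := by
    have hswap := hp.velocityJump_le_parallelogram (a := b) (b := a) (by linarith) hbm ham
    rw [add_comm b a] at hswap
    exact add_le_add (hp.velocityJump_le_parallelogram hw ham hbm) hswap
  have hright := hp.velocityJump_min_add_lt (by linarith) (by linarith) ham hbm
  exact intermediate_value_Ico' hmin hcont ⟨hright, hleft⟩

-- The shock `(w, b)` is compared with `(a, m)` as well: the equation for `w` turns the upper bound
-- for that pair into the lower bound for `(w, a)` against `(b, m)`.
theorem middle_volume_estimate (hp : IsPressureLaw p r) (hw : 0 < a + b - m) (ham : a < m)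
    (hbm : b < m) (hK : LipschitzOnWith K r (Icc (a + b - m) m)) (hc : 0 < c)
    (hcm : c ≤ √(r m)) (hmem : w ∈ Ico (a + b - m) (min a b))
    (heq : velocityJump p w a + velocityJump p w b = velocityJump p b m + velocityJump p a m) :
    w - (a + b - m) ≤ K / (2 * c ^ 2) * ((m - b) * (m - a)) ∧
      |velocityJump p w a - velocityJump p b m| ≤ K / (2 * c) * ((m - b) * (m - a)) := by
  obtain ⟨hle, hlt⟩ := hmem
  obtain ⟨hwa, hwb⟩ := lt_min_iff.1 hlt
  have hslope {y : ℝ} (hwy : w < y) (hym : y < m) :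
      c * (w - (a + b - m)) ≤ velocityJump p (a + b - m) y - velocityJump p w y := by
    have hy : 0 < y := (hw.trans_le hle).trans hwy
    have hcy : c ≤ √(r y) := hcm.trans ((hp.sqrt_lt_sqrt_iff hy (hy.trans hym)).2 hym).le
    exact (mul_le_mul_of_nonneg_right hcy (sub_nonneg.2 hle)).trans
      (hp.sqrt_mul_sub_le_velocityJump_sub hw hle hwy)
  have hslope_a := hslope hwa ham
  have hslope_b := hslope hwb hbm
  have hnonneg : 0 ≤ c * (w - (a + b - m)) := mul_nonneg hc.le (sub_nonneg.2 hle)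
  have hpar_a := hp.velocityJump_parallelogram_sub_le hw ham hbm hK hc hcm
  have hpar_b := hp.velocityJump_parallelogram_sub_le (a := b) (b := a) (by linarith) hbm ham
    (by rwa [add_comm b a]) hc hcm
  rw [add_comm b a, mul_comm (m - a)] at hpar_b
  constructor
  · rw [show K / (2 * c ^ 2) * ((m - b) * (m - a)) =
      K / (2 * c) * ((m - b) * (m - a)) / c by field_simp, le_div_iff₀ hc]
    linarith
  · rw [abs_le]
    constructor <;> linarith

theorem abs_shockStrength_sub_le (hp : IsPressureLaw p r) (hw : 0 < a + b - m) (ham : a < m)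
    (hbm : b < m) (hK : LipschitzOnWith K r (Icc (a + b - m) m)) (hc : 0 < c)
    (hcm : c ≤ √(r m)) (hmem : w ∈ Ico (a + b - m) (min a b))
    (heq : velocityJump p w a + velocityJump p w b = velocityJump p b m + velocityJump p a m) :
    |shockStrength p w a - shockStrength p b m| ≤
      max (K / (2 * c ^ 2)) (K / (2 * c)) * (shockStrength p b m * shockStrength p a m) := by
  obtain ⟨hvolume, hvelocity⟩ := hp.middle_volume_estimate hw ham hbm hK hc hcm hmem heq
  have hwidth : |(a - w) - (m - b)| = w - (a + b - m) := by
    rw [abs_sub_comm, abs_of_nonneg (by linarith [hmem.1])]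
    ring
  have hvol_nonneg : 0 ≤ (m - b) * (m - a) :=
    mul_nonneg (sub_nonneg.2 hbm.le) (sub_nonneg.2 ham.le)
  calc |shockStrength p w a - shockStrength p b m|
      ≤ max |(a - w) - (m - b)| |velocityJump p w a - velocityJump p b m| :=
        abs_max_sub_max_le_max _ _ _ _
    _ ≤ max (K / (2 * c ^ 2)) (K / (2 * c)) * ((m - b) * (m - a)) := by
        rw [hwidth, max_mul_of_nonneg _ _ hvol_nonneg]
        exact max_le_max hvolume hvelocity
    _ ≤ max (K / (2 * c ^ 2)) (K / (2 * c)) * (shockStrength p b m * shockStrength p a m) := by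
        gcongr
        · exact (sub_nonneg.2 hbm.le).trans sub_le_shockStrength
        · exact sub_le_shockStrength
        · exact sub_le_shockStrength

end IsPressureLaw

section Shocks

variable {p r : ℝ → ℝ} {U V : ℝ × ℝ} {s : ℝ}

theorem rankineHugoniot_iff :
    (-s) • (V - U) + (flux p V - flux p U) = 0 ↔
      V.2 = U.2 - s * (V.1 - U.1) ∧ s * (V.2 - U.2) = p V.1 - p U.1 := by
  simp only [flux, Prod.ext_iff, Prod.fst_add, Prod.snd_add, Prod.smul_fst, Prod.smul_snd,
    Prod.fst_sub, Prod.snd_sub, Prod.fst_zero, Prod.snd_zero, smul_eq_mul]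
  constructor <;> rintro ⟨h₁, h₂⟩ <;> constructor <;> linarith

theorem eq_shockSpeed_of_rankineHugoniot (hUV : U.1 < V.1) (hs : 0 ≤ s)
    (h : (-s) • (V - U) + (flux p V - flux p U) = 0) : s = shockSpeed p U.1 V.1 := by
  obtain ⟨hu, hpressure⟩ := rankineHugoniot_iff.1 h
  have hslope : -slope p U.1 V.1 = s ^ 2 := by
    rw [slope_def_field, ← hpressure, hu]
    field_simp [(sub_pos.2 hUV).ne']
    ring
  rw [shockSpeed, hslope, sqrt_sq hs]

theorem isTwoShock_iff (hp : IsPressureLaw p r) (hU : 0 < U.1) (hV : 0 < V.1) :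
    IsTwoShock p r U V s ↔
      U.1 < V.1 ∧ s = shockSpeed p U.1 V.1 ∧ V.2 = U.2 - velocityJump p U.1 V.1 := by
  constructor
  · rintro ⟨hRH, hright, hleft⟩
    have hUV : U.1 < V.1 := (hp.sqrt_lt_sqrt_iff hU hV).1 (hright.trans hleft)
    have hs := eq_shockSpeed_of_rankineHugoniot hUV ((sqrt_nonneg _).trans hright.le) hRH
    refine ⟨hUV, hs, ?_⟩
    rw [velocityJump_eq_mul_shockSpeed hUV.le, ← hs, mul_comm]
    exact (rankineHugoniot_iff.1 hRH).1
  · rintro ⟨hUV, rfl, hu⟩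
    have hspeed := hp.shockSpeed_mem_Ioo hU hUV
    refine ⟨rankineHugoniot_iff.2 ⟨?_, ?_⟩, hspeed.1, hspeed.2⟩
    · rw [hu, velocityJump_eq_mul_shockSpeed hUV.le, mul_comm]
    · linear_combination shockSpeed p U.1 V.1 * hu -
        shockSpeed_mul_velocityJump hUV.le (hp.slope_neg hU hUV).le

-- The p-system is invariant under the space reflection `x ↦ -x`, `u ↦ -u`.
theorem isOneShock_iff_isTwoShock_reflect :
    IsOneShock p r U V s ↔ IsTwoShock p r (V.1, -V.2) (U.1, -U.2) (-s) := by
  constructor <;> rintro ⟨hRH, hright, hleft⟩ <;>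
    refine ⟨rankineHugoniot_iff.2 ?_, by linarith, by linarith⟩ <;>
    obtain ⟨hu, hpressure⟩ := rankineHugoniot_iff.1 hRH <;>
    constructor <;> linarith

theorem isOneShock_iff (hp : IsPressureLaw p r) (hU : 0 < U.1) (hV : 0 < V.1) :
    IsOneShock p r U V s ↔
      V.1 < U.1 ∧ s = -shockSpeed p V.1 U.1 ∧ V.2 = U.2 - velocityJump p V.1 U.1 := by
  rw [isOneShock_iff_isTwoShock_reflect,
    isTwoShock_iff (U := (V.1, -V.2)) (V := (U.1, -U.2)) hp hV hU, neg_eq_iff_eq_neg]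
  refine and_congr_right' (and_congr_right' ?_)
  constructor <;> intro hu <;> linarith

theorem IsTwoShock.norm_sub (hp : IsPressureLaw p r) (hU : 0 < U.1) (hV : 0 < V.1)
    (h : IsTwoShock p r U V s) : ‖V - U‖ = shockStrength p U.1 V.1 := by
  obtain ⟨hUV, -, hu⟩ := (isTwoShock_iff hp hU hV).1 h
  rw [Prod.norm_def, Prod.fst_sub, Prod.snd_sub, hu, sub_sub_cancel_left, norm_neg,
    norm_of_nonneg velocityJump_nonneg, norm_of_nonneg (sub_nonneg.2 hUV.le), shockStrength]

theorem IsOneShock.norm_sub (hp : IsPressureLaw p r) (hU : 0 < U.1) (hV : 0 < V.1)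
    (h : IsOneShock p r U V s) : ‖V - U‖ = shockStrength p V.1 U.1 := by
  have hreflect : ‖(U.1, -U.2) - (V.1, -V.2)‖ = shockStrength p V.1 U.1 :=
    (isOneShock_iff_isTwoShock_reflect.1 h).norm_sub hp hV hU
  rw [← hreflect]
  simp [Prod.norm_def, abs_sub_comm, neg_add_eq_sub]

theorem exists_outgoing_shocks {Um Us Up : ℝ × ℝ} {s₁ s₂ c : ℝ} {K : ℝ≥0}
    (hp : IsPressureLaw p r) (hUm : 0 < Um.1) (hUs : 0 < Us.1) (hUp : 0 < Up.1)
    (h₁ : IsOneShock p r Us Up s₁) (h₂ : IsTwoShock p r Um Us s₂) (hw : 0 < Um.1 + Up.1 - Us.1)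
    (hK : LipschitzOnWith K r (Icc (Um.1 + Up.1 - Us.1) Us.1)) (hc : 0 < c)
    (hcs : c ≤ √(r Us.1)) :
    ∃ (Ut : ℝ × ℝ) (st₁ st₂ : ℝ),
      0 < Ut.1 ∧ IsOneShock p r Um Ut st₁ ∧ IsTwoShock p r Ut Up st₂ ∧
      |‖Ut - Um‖ - ‖Up - Us‖| ≤
        max (K / (2 * c ^ 2)) (K / (2 * c)) * (‖Up - Us‖ * ‖Us - Um‖) ∧
      |‖Up - Ut‖ - ‖Us - Um‖| ≤
        max (K / (2 * c ^ 2)) (K / (2 * c)) * (‖Up - Us‖ * ‖Us - Um‖) := by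
  obtain ⟨hUpUs, -, hup⟩ := (isOneShock_iff hp hUs hUp).1 h₁
  obtain ⟨hUmUs, -, hus⟩ := (isTwoShock_iff hp hUm hUs).1 h₂
  obtain ⟨w, hmem, heq⟩ := hp.exists_middle_volume hw hUmUs hUpUs
  obtain ⟨hwm, hwp⟩ := lt_min_iff.1 hmem.2
  have hw_pos : 0 < w := hw.trans_le hmem.1
  set Ut : ℝ × ℝ := (w, Um.2 - velocityJump p w Um.1)
  have ht₁ : IsOneShock p r Um Ut (-shockSpeed p w Um.1) :=
    (isOneShock_iff hp hUm hw_pos).2 ⟨hwm, rfl, rfl⟩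
  have ht₂ : IsTwoShock p r Ut Up (shockSpeed p w Up.1) :=
    (isTwoShock_iff hp hw_pos hUp).2 ⟨hwp, rfl, by linarith⟩
  refine ⟨Ut, _, _, hw_pos, ht₁, ht₂, ?_, ?_⟩ <;>
    rw [h₁.norm_sub hp hUs hUp, h₂.norm_sub hp hUm hUs]
  · rw [ht₁.norm_sub hp hUm hw_pos]
    exact hp.abs_shockStrength_sub_le hw hUmUs hUpUs hK hc hcs hmem heq
  · rw [ht₂.norm_sub hp hw_pos hUp, mul_comm (shockStrength p Up.1 Us.1)]
    rw [add_comm Um.1] at hw hK hmem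
    rw [min_comm] at hmem
    exact hp.abs_shockStrength_sub_le hw hUpUs hUmUs hK hc hcs hmem
      (by rw [add_comm, heq, add_comm])

end Shocks

theorem isPressureLaw_pP {γ : ℝ} (hγ : 0 < γ) :
    IsPressureLaw (pP γ) (fun v => γ * v ^ (-γ - 1)) where
  hasDerivAt hv := by
    change HasDerivAt (fun v : ℝ => v ^ (-γ)) _ _
    simpa only [neg_mul] using hasDerivAt_rpow_const (p := -γ) (Or.inl hv.ne')
  pos hv := mul_pos hγ (rpow_pos_of_pos hv _)
  strictAntiOn _ hx _ _ hxy :=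
    mul_lt_mul_of_pos_left (rpow_lt_rpow_of_neg hx hxy (by linarith)) hγ
  locallyLipschitzOn v hv := by
    have hsmooth : ContDiffAt ℝ 1 (fun v => γ * v ^ (-γ - 1)) v :=
      contDiffAt_const.mul (contDiffAt_rpow_const_of_ne hv.ne')
    obtain ⟨K, t, ht, hLip⟩ := hsmooth.exists_lipschitzOnWith
    exact ⟨K, t, mem_nhdsWithin_of_mem_nhds ht, hLip⟩

theorem glimm_interaction_estimate_general {p r : ℝ → ℝ} (hp : IsPressureLaw p r)
    {vmin vmax : ℝ} (hvmin : 0 < vmin) (hv : vmin ≤ vmax) :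
    ∃ δ₀ C : ℝ, 0 < δ₀ ∧ 0 < C ∧
      ∀ (Um Us Up : ℝ × ℝ) (s₁ s₂ : ℝ),
        Um.1 ∈ Icc vmin vmax → Us.1 ∈ Icc vmin vmax → Up.1 ∈ Icc vmin vmax →
        IsOneShock p r Us Up s₁ → IsTwoShock p r Um Us s₂ →
        min ‖Up - Us‖ ‖Us - Um‖ ≤ δ₀ →
        ∃ (Ut : ℝ × ℝ) (st₁ st₂ : ℝ),
          0 < Ut.1 ∧ IsOneShock p r Um Ut st₁ ∧ IsTwoShock p r Ut Up st₂ ∧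
          |‖Ut - Um‖ - ‖Up - Us‖| ≤ C * ‖Up - Us‖ * ‖Us - Um‖ ∧
          |‖Up - Ut‖ - ‖Us - Um‖| ≤ C * ‖Up - Us‖ * ‖Us - Um‖ := by
  have hδ₀ : 0 < vmin / 2 := half_pos hvmin
  obtain ⟨K, hK⟩ := (hp.locallyLipschitzOn.mono fun _ h => hδ₀.trans_le h.1)
    |>.exists_lipschitzOnWith_of_compact (isCompact_Icc (a := vmin / 2) (b := vmax))
  have hvmax : 0 < vmax := hvmin.trans_le hv
  have hc : 0 < √(r vmax) := sqrt_pos.2 (hp.pos hvmax)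
  refine ⟨vmin / 2, max (↑(K + 1) / (2 * √(r vmax) ^ 2)) (↑(K + 1) / (2 * √(r vmax))),
    hδ₀, by positivity, fun Um Us Up s₁ s₂ hUm hUs hUp h₁ h₂ hδ => ?_⟩
  have hUs_pos : 0 < Us.1 := hvmin.trans_le hUs.1
  have hw : vmin / 2 ≤ Um.1 + Up.1 - Us.1 := by
    have hwidth₁ : Us.1 - Up.1 ≤ ‖Up - Us‖ :=
      (le_abs_self _).trans ((abs_sub_comm _ _).trans_le (norm_fst_le (Up - Us)))
    have hwidth₂ : Us.1 - Um.1 ≤ ‖Us - Um‖ := (le_abs_self _).trans (norm_fst_le (Us - Um))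
    rcases min_le_iff.1 hδ with hδ₁ | hδ₂ <;> linarith [hUm.1, hUp.1]
  simp only [mul_assoc _ ‖_‖]
  exact exists_outgoing_shocks hp (hvmin.trans_le hUm.1) hUs_pos (hvmin.trans_le hUp.1) h₁ h₂
    (hδ₀.trans_le hw) ((hK.mono (Icc_subset_Icc hw hUs.2)).weaken le_self_add) hc
    (sqrt_le_sqrt (hp.strictAntiOn.antitoneOn hUs_pos hvmax hUs.2))

/-- Glimm-type interaction estimate.  The collision of the incoming
2-shock and 1-shock produces an outgoing Riemann solution consisting of two shocks
whose strengths differ from the incoming ones by `O(δ₁ δ₂)`. -/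
theorem glimm_interaction_estimate
    (γ vbar : ℝ) (hγ : 1 < γ) (hvbar : 0 < vbar) :
    ∃ δ₀ C : ℝ, 0 < δ₀ ∧ 0 < C ∧
      ∀ (Um Us Up : ℝ × ℝ) (s₁ s₂ : ℝ),
        Um.1 ∈ Set.Icc (vbar / 2) (2 * vbar) →
        Us.1 ∈ Set.Icc (vbar / 2) (2 * vbar) →
        Up.1 ∈ Set.Icc (vbar / 2) (2 * vbar) →
        (-s₁) • (Up - Us) + (Fl γ Up - Fl γ Us) = 0 →
        (-s₂) • (Us - Um) + (Fl γ Us - Fl γ Um) = 0 →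
        lam1 γ Up.1 < s₁ → s₁ < lam1 γ Us.1 →
        lam2 γ Us.1 < s₂ → s₂ < lam2 γ Um.1 →
        ‖Up - Us‖ ≤ δ₀ → ‖Us - Um‖ ≤ δ₀ →
        ∃ (Ut : ℝ × ℝ) (st₁ st₂ : ℝ),
          0 < Ut.1 ∧
          (-st₁) • (Ut - Um) + (Fl γ Ut - Fl γ Um) = 0 ∧
          (-st₂) • (Up - Ut) + (Fl γ Up - Fl γ Ut) = 0 ∧
          lam1 γ Ut.1 < st₁ ∧ st₁ < lam1 γ Um.1 ∧ lam1 γ Um.1 < 0 ∧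
          0 < lam2 γ Up.1 ∧ lam2 γ Up.1 < st₂ ∧ st₂ < lam2 γ Ut.1 ∧
          |‖Ut - Um‖ - ‖Up - Us‖| ≤ C * ‖Up - Us‖ * ‖Us - Um‖ ∧
          |‖Up - Ut‖ - ‖Us - Um‖| ≤ C * ‖Up - Us‖ * ‖Us - Um‖ := by
  have hp := isPressureLaw_pP (zero_lt_one.trans hγ)
  obtain ⟨δ₀, C, hδ₀, hC, hmain⟩ :=
    glimm_interaction_estimate_general hp (half_pos hvbar) (by linarith : vbar / 2 ≤ 2 * vbar)
  refine ⟨δ₀, C, hδ₀, hC, fun Um Us Up s₁ s₂ hUm hUs hUp hRH₁ hRH₂ hr₁ hl₁ hr₂ hl₂ hδ₁ _ => ?_⟩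
  obtain ⟨Ut, st₁, st₂, hUt, ⟨hRHt₁, hrt₁, hlt₁⟩, ⟨hRHt₂, hrt₂, hlt₂⟩, hest₁, hest₂⟩ :=
    hmain Um Us Up s₁ s₂ hUm hUs hUp ⟨hRH₁, hr₁, hl₁⟩ ⟨hRH₂, hr₂, hl₂⟩ (min_le_of_left_le hδ₁)
  have hvbar_half : 0 < vbar / 2 := half_pos hvbar
  exact ⟨Ut, st₁, st₂, hUt, hRHt₁, hRHt₂, hrt₁, hlt₁,
    neg_neg_of_pos (sqrt_pos.2 (hp.pos (hvbar_half.trans_le hUm.1))),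
    sqrt_pos.2 (hp.pos (hvbar_half.trans_le hUp.1)), hrt₂, hlt₂, hest₁, hest₂⟩
end
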